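/- arXiv:2506.14033 — 3 statements merged into one kernel-verified Lean document; each statement's English description precedes it below -/
import Mathlib

section
/- With the notation of the context, given C > 0 there exists k₀ > 0 such that for every multi-index α ∈ ℕ₀ⁿ and every ℓ ∈ ℕ₀ there is a constant C_{α,ℓ} > 0 with |∂_x^α (∂/∂s)^ℓ B_k(x,s)| ≤ C_{α,ℓ}·k^ℓ for all k ≥ k₀, all x ∈ U and all s with 0 ≤ s ≤ C·k^{-2}. -/
open Set

/-! Since `τ (x, 0) = 0`, Hadamard's lemma gives `τ (x, s) = s h (x, s)` with `h` smooth, so in the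
rescaled variable `σ = k s` the phase `k τ (x, σ / k) = σ h (x, σ / k)` no longer grows with `k`.
Treating `ε = 1 / k` as one more smooth parameter, `B_k (x, σ / k)` becomes the value at `(x, σ, ε)`
of a bounded family of smooth functions on a fixed domain. For `s ≤ C / k` the variables `σ` and `ε`
range over compact intervals, and each `∂_s = k ∂_σ` costs exactly one factor `k`. -/

open scoped ContDiff Topology

/-- A set that is convex near each of its points, so that the mean value inequality applies locally
even at boundary points (for instance, an open set times a half-open interval). -/
def IsLocallyConvexSet {E : Type*} [NormedAddCommGroup E] [NormedSpace ℝ E] (S : Set E) : Prop :=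
  ∀ p ∈ S, ∃ u ∈ 𝓝 p, Convex ℝ (u ∩ S)

namespace IsLocallyConvexSet

variable {E E' : Type*} [NormedAddCommGroup E] [NormedSpace ℝ E]
  [NormedAddCommGroup E'] [NormedSpace ℝ E'] {S : Set E} {S' : Set E'}

theorem of_isOpen (hS : IsOpen S) : IsLocallyConvexSet S := fun p hp => by
  obtain ⟨r, hr, hrS⟩ := Metric.isOpen_iff.1 hS p hp
  refine ⟨Metric.ball p r, Metric.ball_mem_nhds p hr, ?_⟩
  rw [inter_eq_left.2 hrS]
  exact convex_ball p r

theorem of_convex (hS : Convex ℝ S) : IsLocallyConvexSet S := fun _ _ =>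
  ⟨univ, Filter.univ_mem, convex_univ.inter hS⟩

theorem prod (hS : IsLocallyConvexSet S) (hS' : IsLocallyConvexSet S') :
    IsLocallyConvexSet (S ×ˢ S') := by
  rintro ⟨p, p'⟩ ⟨hp, hp'⟩
  obtain ⟨u, hu, hconv⟩ := hS p hp
  obtain ⟨u', hu', hconv'⟩ := hS' p' hp'
  refine ⟨u ×ˢ u', prod_mem_nhds hu hu', ?_⟩
  rw [prod_inter_prod]
  exact hconv.prod hconv'

theorem exists_convex_subset (hS : IsLocallyConvexSet S) {p : E} (hp : p ∈ S) {v : Set E}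
    (hv : v ∈ 𝓝[S] p) : ∃ w ∈ 𝓝[S] p, w ⊆ v ∩ S ∧ Convex ℝ w := by
  obtain ⟨u, hu, hconv⟩ := hS p hp
  obtain ⟨r, hr, hrv⟩ := Metric.mem_nhdsWithin_iff.1 hv
  refine ⟨Metric.ball p r ∩ (u ∩ S), ?_, fun q hq => ⟨hrv ⟨hq.1, hq.2.2⟩, hq.2.2⟩,
    (convex_ball p r).inter hconv⟩
  exact Filter.inter_mem (mem_nhdsWithin_of_mem_nhds (Metric.ball_mem_nhds p hr))
    (Filter.inter_mem (mem_nhdsWithin_of_mem_nhds hu) self_mem_nhdsWithin)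

end IsLocallyConvexSet

section ParametricIntegral

variable {E F Y : Type*} [NormedAddCommGroup E] [NormedSpace ℝ E]
  [NormedAddCommGroup F] [NormedSpace ℝ F] {S : Set E} {p : E}

theorem eventually_forall_norm_sub_sub_fderiv_le [TopologicalSpace Y] {L : Set Y}
    (hS : IsLocallyConvexSet S) (hL : IsCompact L) {g : E → Y → F} {g' : E → Y → E →L[ℝ] F}
    (hg' : ContinuousOn (Function.uncurry g') (S ×ˢ L))
    (hderiv : ∀ q ∈ S, ∀ t ∈ L, HasFDerivWithinAt (g · t) (g' q t) S q)
    (hp : p ∈ S) {ε : ℝ} (hε : 0 < ε) :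
    ∀ᶠ q in 𝓝[S] p, ∀ t ∈ L, ‖g q t - g p t - g' p t (q - p)‖ ≤ ε * ‖q - p‖ := by
  obtain ⟨v, hv, hvε⟩ := hL.mem_uniformity_of_prod hg' hp (Metric.dist_mem_uniformity hε)
  obtain ⟨w, hw, hwv, hconv⟩ := hS.exists_convex_subset hp hv
  filter_upwards [hw] with q hq t ht
  refine hconv.norm_image_sub_le_of_norm_hasFDerivWithin_le' (f := (g · t)) (f' := (g' · t))
    (fun z hz => (hderiv z (hwv hz).2 t ht).mono fun _ h => (hwv h).2) (fun z hz => ?_)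
    (mem_of_mem_nhdsWithin hp hw) hq
  have hdist : dist (g' z t) (g' p t) < ε := hvε z (hwv hz).1 t ht
  exact (dist_eq_norm (g' z t) (g' p t) ▸ hdist).le

theorem hasFDerivWithinAt_intervalIntegral [CompleteSpace F] (hS : IsLocallyConvexSet S) {a b : ℝ}
    {g : E → ℝ → F} {g' : E → ℝ → E →L[ℝ] F}
    (hg : ContinuousOn (Function.uncurry g) (S ×ˢ uIcc a b))
    (hg' : ContinuousOn (Function.uncurry g') (S ×ˢ uIcc a b))
    (hderiv : ∀ q ∈ S, ∀ t ∈ uIcc a b, HasFDerivWithinAt (g · t) (g' q t) S q) (hp : p ∈ S) :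
    HasFDerivWithinAt (fun q => ∫ t in a..b, g q t) (∫ t in a..b, g' p t) S p := by
  have hint : ∀ q ∈ S, IntervalIntegrable (g q) MeasureTheory.volume a b := fun q hq =>
    (hg.uncurry_left q hq).intervalIntegrable
  have hint' : IntervalIntegrable (g' p) MeasureTheory.volume a b :=
    (hg'.uncurry_left p hp).intervalIntegrable
  have hint'_apply (v : E) : IntervalIntegrable (fun t => g' p t v) MeasureTheory.volume a b :=
    ((hg'.uncurry_left p hp).clm_apply continuousOn_const).intervalIntegrable
  refine .of_isLittleO (Asymptotics.isLittleO_iff.2 fun ε hε => ?_)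
  have hε' : 0 < ε / (|b - a| + 1) := by positivity
  filter_upwards [eventually_forall_norm_sub_sub_fderiv_le hS isCompact_uIcc hg' hderiv hp hε',
    self_mem_nhdsWithin] with q hq hqS
  rw [ContinuousLinearMap.intervalIntegral_apply hint',
    ← intervalIntegral.integral_sub (hint q hqS) (hint p hp),
    ← intervalIntegral.integral_sub ((hint q hqS).sub (hint p hp)) (hint'_apply _)]
  calc ‖∫ t in a..b, g q t - g p t - g' p t (q - p)‖
      ≤ ε / (|b - a| + 1) * ‖q - p‖ * |b - a| :=
        intervalIntegral.norm_integral_le_of_norm_le_const fun t ht => hq t (uIoc_subset_uIcc ht)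
    _ = ε * ‖q - p‖ * (|b - a| / (|b - a| + 1)) := by ring
    _ ≤ ε * ‖q - p‖ := mul_le_of_le_one_right (by positivity)
        ((div_le_one (by positivity)).2 (by linarith))

end ParametricIntegral

section Slices

variable {E F Y : Type*} [NormedAddCommGroup E] [NormedSpace ℝ E]
  [NormedAddCommGroup F] [NormedSpace ℝ F] [NormedAddCommGroup Y] [NormedSpace ℝ Y]
  {S : Set E} {I : Set Y} {f : E × Y → F} {p : E} {t : Y}

theorem iteratedFDerivWithin_slice (hS : UniqueDiffOn ℝ S) (hI : UniqueDiffOn ℝ I)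
    (hf : ContDiffOn ℝ ∞ f (S ×ˢ I)) (hp : p ∈ S) (ht : t ∈ I) (m : ℕ) :
    iteratedFDerivWithin ℝ m (fun q => f (q, t)) S p =
      (iteratedFDerivWithin ℝ m f (S ×ˢ I) (p, t)).compContinuousLinearMap
        fun _ => ContinuousLinearMap.inl ℝ E Y := by
  let incl : E →ᴬ[ℝ] E × Y :=
    (ContinuousLinearMap.inl ℝ E Y).toContinuousAffineMap + ContinuousAffineMap.const ℝ E (0, t)
  have hincl (q : E) : incl q = (q, t) := by simp [incl]
  have hpre : incl ⁻¹' (S ×ˢ I) = S := by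
    ext q
    simp [hincl, ht]
  have hcontLinear : incl.contLinear = ContinuousLinearMap.inl ℝ E Y := by
    simp [incl]
  have htaylor := (hf.ftaylorSeriesWithin (hS.prod hI)).comp_continuousAffineMap incl
  rw [hpre] at htaylor
  have heq := htaylor.eq_iteratedFDerivWithin_of_uniqueDiffOn (m := m)
    (by exact_mod_cast le_top) hS hp
  simpa [hincl, hcontLinear, Function.comp_def, ftaylorSeriesWithin] using heq.symm

theorem norm_iteratedFDerivWithin_slice_le (hS : UniqueDiffOn ℝ S) (hI : UniqueDiffOn ℝ I)
    (hf : ContDiffOn ℝ ∞ f (S ×ˢ I)) (hp : p ∈ S) (ht : t ∈ I) (m : ℕ) :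
    ‖iteratedFDerivWithin ℝ m (fun q => f (q, t)) S p‖ ≤
      ‖iteratedFDerivWithin ℝ m f (S ×ˢ I) (p, t)‖ := by
  rw [iteratedFDerivWithin_slice hS hI hf hp ht]
  refine (ContinuousMultilinearMap.norm_compContinuousLinearMap_le _ _).trans ?_
  refine mul_le_of_le_one_right (norm_nonneg _) (Finset.prod_le_one (fun _ _ => norm_nonneg _) ?_)
  exact fun _ _ => ContinuousLinearMap.norm_inl_le_one ℝ E Y

theorem continuousOn_iteratedFDerivWithin_slice (hS : UniqueDiffOn ℝ S) (hI : UniqueDiffOn ℝ I)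
    (hf : ContDiffOn ℝ ∞ f (S ×ˢ I)) (m : ℕ) :
    ContinuousOn (Function.uncurry fun q t => iteratedFDerivWithin ℝ m (fun q => f (q, t)) S q)
      (S ×ˢ I) := by
  have hcont : ContinuousOn (iteratedFDerivWithin ℝ m f (S ×ˢ I)) (S ×ˢ I) :=
    hf.continuousOn_iteratedFDerivWithin (by exact_mod_cast le_top) (hS.prod hI)
  refine ((ContinuousMultilinearMap.compContinuousLinearMapL
    fun _ : Fin m => ContinuousLinearMap.inl ℝ E Y).continuous.comp_continuousOn hcont).congr ?_
  exact fun z hz => iteratedFDerivWithin_slice hS hI hf hz.1 hz.2 m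

theorem contDiffOn_slice (hf : ContDiffOn ℝ ∞ f (S ×ˢ I)) (ht : t ∈ I) :
    ContDiffOn ℝ ∞ (fun q => f (q, t)) S :=
  hf.comp (f := fun q => (q, t)) (by fun_prop) fun _ hq => ⟨hq, ht⟩

end Slices

section ParametricIntegralSmooth

variable {E F : Type*} [NormedAddCommGroup E] [NormedSpace ℝ E]
  [NormedAddCommGroup F] [NormedSpace ℝ F] [CompleteSpace F] {S : Set E} {I : Set ℝ} {a b : ℝ}
  {f : E × ℝ → F}

theorem intervalIntegral_curryLeft {m : ℕ} (g : ℝ → E [×m + 1]→L[ℝ] F) :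
    ∫ t in a..b, (g t).curryLeft = (∫ t in a..b, g t).curryLeft :=
  LinearIsometry.intervalIntegral_comp_comm (𝕜 := ℝ) (F := E →L[ℝ] E [×m]→L[ℝ] F)
    (continuousMultilinearCurryLeftEquiv ℝ (fun _ : Fin (m + 1) => E) F).toLinearIsometry g

theorem hasFTaylorSeriesUpToOn_intervalIntegral (hS : UniqueDiffOn ℝ S)
    (hconv : IsLocallyConvexSet S) (hI : UniqueDiffOn ℝ I) (hab : uIcc a b ⊆ I)
    (hf : ContDiffOn ℝ ∞ f (S ×ˢ I)) :
    HasFTaylorSeriesUpToOn ∞ (fun q => ∫ t in a..b, f (q, t))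
      (fun q m => ∫ t in a..b, iteratedFDerivWithin ℝ m (fun q => f (q, t)) S q) S := by
  have hcont (m : ℕ) := (continuousOn_iteratedFDerivWithin_slice hS hI hf m).mono
    (prod_mono_right hab)
  have hderiv (m : ℕ) (q) (hq : q ∈ S) :
      HasFDerivWithinAt
        (fun q => ∫ t in a..b, iteratedFDerivWithin ℝ m (fun q => f (q, t)) S q)
        (∫ t in a..b, iteratedFDerivWithin ℝ (m + 1) (fun q => f (q, t)) S q).curryLeft S q := by
    rw [← intervalIntegral_curryLeft]
    refine hasFDerivWithinAt_intervalIntegral hconv (hcont m) (g' := fun q t =>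
      (iteratedFDerivWithin ℝ (m + 1) (fun q => f (q, t)) S q).curryLeft) ?_
      (fun q hq t ht => ?_) hq
    · exact (continuousMultilinearCurryLeftEquiv ℝ (fun _ : Fin (m + 1) => E)
        F).continuous.comp_continuousOn (hcont (m + 1))
    · exact ((contDiffOn_slice hf (hab ht)).ftaylorSeriesWithin hS).fderivWithin m
        (by exact_mod_cast WithTop.coe_lt_top _) q hq
  refine ⟨fun q _ => ?_, fun m _ q hq => hderiv m q hq,
    fun m _ q hq => (hderiv m q hq).continuousWithinAt⟩
  exact ((continuousMultilinearCurryFin0 ℝ E F).toLinearIsometry.intervalIntegral_comp_comm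
    _).symm

theorem contDiffOn_intervalIntegral (hS : UniqueDiffOn ℝ S)
    (hconv : IsLocallyConvexSet S) (hI : UniqueDiffOn ℝ I) (hab : uIcc a b ⊆ I)
    (hf : ContDiffOn ℝ ∞ f (S ×ˢ I)) :
    ContDiffOn ℝ ∞ (fun q => ∫ t in a..b, f (q, t)) S :=
  (hasFTaylorSeriesUpToOn_intervalIntegral hS hconv hI hab hf).contDiffOn

theorem iteratedFDerivWithin_intervalIntegral (hS : UniqueDiffOn ℝ S)
    (hconv : IsLocallyConvexSet S) (hI : UniqueDiffOn ℝ I) (hab : uIcc a b ⊆ I)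
    (hf : ContDiffOn ℝ ∞ f (S ×ˢ I)) (m : ℕ) {p : E} (hp : p ∈ S) :
    iteratedFDerivWithin ℝ m (fun q => ∫ t in a..b, f (q, t)) S p =
      ∫ t in a..b, iteratedFDerivWithin ℝ m (fun q => f (q, t)) S p :=
  (HasFTaylorSeriesUpToOn.eq_iteratedFDerivWithin_of_uniqueDiffOn
    (hasFTaylorSeriesUpToOn_intervalIntegral hS hconv hI hab hf) (by exact_mod_cast le_top) hS
    hp).symm

end ParametricIntegralSmooth

/-- A bounded subset `{f i | i ∈ J}` of the Fréchet space `C^∞(S)`: on compact subsets of `S` all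
derivatives (taken within `S`) are bounded uniformly in `i ∈ J`. With `J = [1, ∞)` this is the
notion of a family that is `O(1)` in `C^∞`-topology. -/
structure SmoothBoundedOn {ι E F : Type*} [NormedAddCommGroup E] [NormedSpace ℝ E]
    [NormedAddCommGroup F] [NormedSpace ℝ F] (J : Set ι) (f : ι → E → F) (S : Set E) : Prop where
  contDiffOn : ∀ i ∈ J, ContDiffOn ℝ ∞ (f i) S
  exists_bound : ∀ K ⊆ S, IsCompact K → ∀ m : ℕ,
    ∃ M, ∀ i ∈ J, ∀ p ∈ K, ‖iteratedFDerivWithin ℝ m (f i) S p‖ ≤ M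

/-- The derivative of `f` within `S` in the direction `v`, as a function, so that it can be
iterated. -/
noncomputable def dirDerivWithin {E F : Type*} [NormedAddCommGroup E] [NormedSpace ℝ E]
    [NormedAddCommGroup F] [NormedSpace ℝ F] (S : Set E) (v : E) (f : E → F) : E → F :=
  fun p => fderivWithin ℝ f S p v

section DirDerivWithin

variable {E F : Type*} [NormedAddCommGroup E] [NormedSpace ℝ E]
  [NormedAddCommGroup F] [NormedSpace ℝ F] {S : Set E} {f : E → F}

theorem contDiffOn_dirDerivWithin (hS : UniqueDiffOn ℝ S) (v : E) (hf : ContDiffOn ℝ ∞ f S) :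
    ContDiffOn ℝ ∞ (dirDerivWithin S v f) S :=
  (hf.fderivWithin hS (by simp)).clm_apply contDiffOn_const

theorem contDiffOn_iterate_dirDerivWithin (hS : UniqueDiffOn ℝ S) (v : E)
    (hf : ContDiffOn ℝ ∞ f S) (ℓ : ℕ) : ContDiffOn ℝ ∞ ((dirDerivWithin S v)^[ℓ] f) S := by
  induction ℓ with
  | zero => exact hf
  | succ ℓ ih =>
    rw [Function.iterate_succ_apply']
    exact contDiffOn_dirDerivWithin hS v ih

theorem norm_iteratedFDerivWithin_dirDerivWithin_le (hS : UniqueDiffOn ℝ S) (v : E)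
    (hf : ContDiffOn ℝ ∞ f S) {p : E} (hp : p ∈ S) (m : ℕ) :
    ‖iteratedFDerivWithin ℝ m (dirDerivWithin S v f) S p‖ ≤
      ‖v‖ * ‖iteratedFDerivWithin ℝ (m + 1) f S p‖ := by
  have hdf : ContDiffOn ℝ ∞ (fderivWithin ℝ f S) S := hf.fderivWithin hS (by simp)
  rw [← norm_iteratedFDerivWithin_fderivWithin hS hp]
  refine ((ContinuousLinearMap.apply ℝ F v).norm_iteratedFDerivWithin_comp_left (hdf p hp) hS hp
    (by exact_mod_cast le_top)).trans ?_
  gcongr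
  exact ContinuousLinearMap.opNorm_le_bound _ (norm_nonneg v) fun L =>
    (L.le_opNorm v).trans_eq (mul_comm _ _)

end DirDerivWithin

namespace SmoothBoundedOn

variable {ι E F G A : Type*} [NormedAddCommGroup E] [NormedSpace ℝ E]
  [NormedAddCommGroup F] [NormedSpace ℝ F] [NormedAddCommGroup G] [NormedSpace ℝ G]
  [NormedRing A] [NormedAlgebra ℝ A] {J : Set ι} {S : Set E} {f g : ι → E → F}

theorem exists_bound_of_le (hf : SmoothBoundedOn J f S) {K : Set E} (hKS : K ⊆ S)
    (hK : IsCompact K) (m : ℕ) :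
    ∃ M, ∀ j ≤ m, ∀ i ∈ J, ∀ p ∈ K, ‖iteratedFDerivWithin ℝ j (f i) S p‖ ≤ M := by
  choose M hM using hf.exists_bound K hKS hK
  obtain ⟨N, hN⟩ := ((finite_Iic m).image M).bddAbove
  exact ⟨N, fun j hj i hi p hp => (hM j i hi p hp).trans (hN ⟨j, hj, rfl⟩)⟩

theorem of_contDiffOn (hS : UniqueDiffOn ℝ S) {f : E → F} (hf : ContDiffOn ℝ ∞ f S) :
    SmoothBoundedOn J (fun _ => f) S where
  contDiffOn _ _ := hf
  exists_bound K hKS hK m := by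
    have hcont := hf.continuousOn_iteratedFDerivWithin (m := m) (by exact_mod_cast le_top) hS
    obtain ⟨M, hM⟩ := hK.exists_bound_of_continuousOn (hcont.mono hKS)
    exact ⟨M, fun _ _ => hM⟩

theorem add (hS : UniqueDiffOn ℝ S) (hf : SmoothBoundedOn J f S) (hg : SmoothBoundedOn J g S) :
    SmoothBoundedOn J (fun i p => f i p + g i p) S where
  contDiffOn i hi := (hf.contDiffOn i hi).add (hg.contDiffOn i hi)
  exists_bound K hKS hK m := by
    obtain ⟨M, hM⟩ := hf.exists_bound K hKS hK m
    obtain ⟨N, hN⟩ := hg.exists_bound K hKS hK m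
    refine ⟨M + N, fun i hi p hp => ?_⟩
    have hle : (m : WithTop ℕ∞) ≤ ∞ := by exact_mod_cast le_top
    rw [fun_iteratedFDerivWithin_add_apply ((hf.contDiffOn i hi p (hKS hp)).of_le hle)
      ((hg.contDiffOn i hi p (hKS hp)).of_le hle) hS (hKS hp)]
    exact norm_add_le_of_le (hM i hi p hp) (hN i hi p hp)

theorem mul {f g : ι → E → A} (hS : UniqueDiffOn ℝ S) (hf : SmoothBoundedOn J f S)
    (hg : SmoothBoundedOn J g S) : SmoothBoundedOn J (fun i p => f i p * g i p) S where
  contDiffOn i hi := (hf.contDiffOn i hi).mul (hg.contDiffOn i hi)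
  exists_bound K hKS hK m := by
    obtain ⟨M, hM⟩ := hf.exists_bound_of_le hKS hK m
    obtain ⟨N, hN⟩ := hg.exists_bound_of_le hKS hK m
    refine ⟨∑ j ∈ Finset.range (m + 1), m.choose j * M * N, fun i hi p hp => ?_⟩
    refine (norm_iteratedFDerivWithin_mul_le (hf.contDiffOn i hi) (hg.contDiffOn i hi) hS (hKS hp)
      (by exact_mod_cast le_top)).trans (Finset.sum_le_sum fun j hj => ?_)
    have hMj := hM j (Finset.mem_range_succ_iff.1 hj) i hi p hp
    have hM₀ : 0 ≤ M := (norm_nonneg _).trans hMj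
    gcongr
    exact hN (m - j) (m.sub_le j) i hi p hp

theorem comp_right {T : Set F} {g : ι → F → G} {φ : E → F} (hS : UniqueDiffOn ℝ S)
    (hT : UniqueDiffOn ℝ T) (hg : SmoothBoundedOn J g T) (hφ : ContDiffOn ℝ ∞ φ S)
    (hmaps : MapsTo φ S T) : SmoothBoundedOn J (fun i p => g i (φ p)) S where
  contDiffOn i hi := (hg.contDiffOn i hi).comp hφ hmaps
  exists_bound K hKS hK m := by
    have hφK : φ '' K ⊆ T := image_subset_iff.2 fun p hp => hmaps (hKS hp)
    obtain ⟨C, hC⟩ := hg.exists_bound_of_le hφK (hK.image_of_continuousOn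
      (hφ.continuousOn.mono hKS)) m
    obtain ⟨D, hD⟩ := (of_contDiffOn (J := (univ : Set Unit)) hS hφ).exists_bound_of_le hKS hK m
    refine ⟨m.factorial * C * max 1 D ^ m, fun i hi p hp => ?_⟩
    refine norm_iteratedFDerivWithin_comp_le (hg.contDiffOn i hi) hφ (by exact_mod_cast le_top) hT
      hS hmaps (hKS hp) (fun j hj => hC j hj i hi _ (mem_image_of_mem φ hp)) fun j hj hjm => ?_
    calc ‖iteratedFDerivWithin ℝ j φ S p‖ ≤ D := hD j hjm () trivial p hp
      _ ≤ max 1 D := le_max_right _ _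
      _ ≤ max 1 D ^ j := le_self_pow₀ (le_max_left _ _) (by omega)

protected theorem intervalIntegral [CompleteSpace F] {I : Set ℝ} {a b : ℝ} {f : ι → E × ℝ → F}
    (hS : UniqueDiffOn ℝ S) (hconv : IsLocallyConvexSet S) (hI : UniqueDiffOn ℝ I)
    (hab : uIcc a b ⊆ I) (hf : SmoothBoundedOn J f (S ×ˢ I)) :
    SmoothBoundedOn J (fun i p => ∫ t in a..b, f i (p, t)) S where
  contDiffOn i hi := contDiffOn_intervalIntegral hS hconv hI hab (hf.contDiffOn i hi)
  exists_bound K hKS hK m := by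
    obtain ⟨M, hM⟩ := hf.exists_bound (K ×ˢ uIcc a b) (prod_mono hKS hab)
      (hK.prod isCompact_uIcc) m
    refine ⟨M * |b - a|, fun i hi p hp => ?_⟩
    rw [iteratedFDerivWithin_intervalIntegral hS hconv hI hab (hf.contDiffOn i hi) m (hKS hp)]
    refine intervalIntegral.norm_integral_le_of_norm_le_const fun t ht => ?_
    have ht' : t ∈ uIcc a b := uIoc_subset_uIcc ht
    exact (norm_iteratedFDerivWithin_slice_le hS hI (hf.contDiffOn i hi) (hKS hp) (hab ht') m).trans
      (hM i hi (p, t) ⟨hp, ht'⟩)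

protected theorem dirDerivWithin (hS : UniqueDiffOn ℝ S) (v : E) (hf : SmoothBoundedOn J f S) :
    SmoothBoundedOn J (fun i => dirDerivWithin S v (f i)) S where
  contDiffOn i hi := contDiffOn_dirDerivWithin hS v (hf.contDiffOn i hi)
  exists_bound K hKS hK m := by
    obtain ⟨M, hM⟩ := hf.exists_bound K hKS hK (m + 1)
    refine ⟨‖v‖ * M, fun i hi p hp => ?_⟩
    refine (norm_iteratedFDerivWithin_dirDerivWithin_le hS v (hf.contDiffOn i hi) (hKS hp) m).trans
      ?_
    gcongr
    exact hM i hi p hp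

theorem iterate_dirDerivWithin (hS : UniqueDiffOn ℝ S) (v : E) (hf : SmoothBoundedOn J f S)
    (ℓ : ℕ) : SmoothBoundedOn J (fun i => (dirDerivWithin S v)^[ℓ] (f i)) S := by
  induction ℓ with
  | zero => exact hf
  | succ ℓ ih =>
    simp only [Function.iterate_succ_apply']
    exact ih.dirDerivWithin hS v

theorem of_norm_le_div {f : ℝ → E → F} (hf : ∀ k ∈ Ici (1 : ℝ), ContDiffOn ℝ ∞ (f k) S)
    (hO : ∀ K ⊆ S, IsCompact K → ∀ m : ℕ, ∃ C > 0, ∀ i ≤ m, ∀ p ∈ K, ∀ k : ℝ, 1 ≤ k →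
      ‖iteratedFDerivWithin ℝ i (f k) S p‖ ≤ C / k) : SmoothBoundedOn (Ici 1) f S where
  contDiffOn := hf
  exists_bound K hKS hK m := by
    obtain ⟨C, hC, hbound⟩ := hO K hKS hK m
    exact ⟨C, fun k hk p hp => (hbound m le_rfl p hp k hk).trans (div_le_self hC.le hk)⟩

end SmoothBoundedOn

section ChainRule

variable {E F : Type*} [NormedAddCommGroup E] [NormedSpace ℝ E]
  [NormedAddCommGroup F] [NormedSpace ℝ F] {S : Set E} {f : E → F} {v : E} {T : Set ℝ}
  {γ : ℝ → E} {c : ℝ}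

theorem hasDerivWithinAt_comp_dirDerivWithin (hf : DifferentiableOn ℝ f S) (hγT : MapsTo γ T S)
    {t : ℝ} (ht : t ∈ T) (hγ : HasDerivWithinAt γ (c • v) T t) :
    HasDerivWithinAt (f ∘ γ) (c • dirDerivWithin S v f (γ t)) T t := by
  rw [dirDerivWithin, ← map_smul]
  exact (hf _ (hγT ht)).hasFDerivWithinAt.comp_hasDerivWithinAt t hγ hγT

theorem iteratedDerivWithin_comp_eq_pow_smul_dirDerivWithin (hS : UniqueDiffOn ℝ S)
    (hT : UniqueDiffOn ℝ T) (hf : ContDiffOn ℝ ∞ f S) (hγT : MapsTo γ T S)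
    (hγ : ∀ t ∈ T, HasDerivWithinAt γ (c • v) T t) (ℓ : ℕ) {t : ℝ} (ht : t ∈ T) :
    iteratedDerivWithin ℓ (f ∘ γ) T t = c ^ ℓ • (dirDerivWithin S v)^[ℓ] f (γ t) := by
  induction ℓ generalizing t with
  | zero => simp
  | succ ℓ ih =>
    have hderiv := (hasDerivWithinAt_comp_dirDerivWithin
      ((contDiffOn_iterate_dirDerivWithin hS v hf ℓ).differentiableOn (by simp)) hγT ht
      (hγ t ht)).const_smul (c ^ ℓ)
    rw [iteratedDerivWithin_succ, derivWithin_congr (fun _ => ih) (ih ht),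
      Function.iterate_succ_apply', pow_succ, mul_smul]
    exact hderiv.derivWithin (hT t ht)

end ChainRule

section Hadamard

variable {E F : Type*} [NormedAddCommGroup E] [NormedSpace ℝ E]
  [NormedAddCommGroup F] [NormedSpace ℝ F] [CompleteSpace F] {S : Set E} {J : Set ℝ}
  {f : E × ℝ → F}

theorem eq_smul_intervalIntegral_dirDerivWithin (hS : UniqueDiffOn ℝ S) (hJ : UniqueDiffOn ℝ J)
    (hJconv : Convex ℝ J) (h0 : 0 ∈ J) (hf : ContDiffOn ℝ ∞ f (S ×ˢ J)) {x : E} (hx : x ∈ S)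
    (hfx : f (x, 0) = 0) {s : ℝ} (hs : s ∈ J) :
    f (x, s) = s • ∫ u in 0..1, dirDerivWithin (S ×ˢ J) (0, 1) f (x, u * s) := by
  have hmaps : MapsTo (fun u : ℝ => (x, u * s)) (Icc 0 1) (S ×ˢ J) := fun u hu =>
    ⟨hx, hJconv.smul_mem_of_zero_mem h0 hs hu⟩
  have hderiv : ∀ u ∈ Icc (0 : ℝ) 1, HasDerivWithinAt (fun u => f (x, u * s))
      (s • dirDerivWithin (S ×ˢ J) (0, 1) f (x, u * s)) (Icc 0 1) u := fun u hu => by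
    refine hasDerivWithinAt_comp_dirDerivWithin (hf.differentiableOn (by simp)) hmaps hu ?_
    simpa using (hasDerivWithinAt_const u _ x).prodMk ((hasDerivWithinAt_id u _).mul_const s)
  have hcont : ContinuousOn (fun u => s • dirDerivWithin (S ×ˢ J) (0, 1) f (x, u * s))
      (Icc 0 1) :=
    ((contDiffOn_dirDerivWithin (hS.prod hJ) _ hf).continuousOn.comp (by fun_prop)
      hmaps).const_smul s
  have hftc := intervalIntegral.integral_eq_sub_of_hasDerivAt_of_le zero_le_one
    (fun u hu => (hderiv u hu).continuousWithinAt)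
    (fun u hu => (hderiv u (Ioo_subset_Icc_self hu)).hasDerivAt (Icc_mem_nhds hu.1 hu.2))
    (hcont.intervalIntegrable_of_Icc zero_le_one)
  simpa [hfx] using hftc.symm

theorem exists_contDiffOn_eq_smul_of_eq_zero (hS : UniqueDiffOn ℝ S) (hSconv : IsLocallyConvexSet S)
    (hJ : UniqueDiffOn ℝ J) (hJconv : Convex ℝ J) (h0 : 0 ∈ J) (hf : ContDiffOn ℝ ∞ f (S ×ˢ J))
    (hf0 : ∀ x ∈ S, f (x, 0) = 0) :
    ∃ h : E × ℝ → F, ContDiffOn ℝ ∞ h (S ×ˢ J) ∧ ∀ x ∈ S, ∀ s ∈ J, f (x, s) = s • h (x, s) := by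
  refine ⟨fun q => ∫ u in 0..1, dirDerivWithin (S ×ˢ J) (0, 1) f (q.1, u * q.2), ?_,
    fun x hx s hs => eq_smul_intervalIntegral_dirDerivWithin hS hJ hJconv h0 hf hx
      (hf0 x hx) hs⟩
  have hmaps : MapsTo (fun z : (E × ℝ) × ℝ => (z.1.1, z.2 * z.1.2)) ((S ×ˢ J) ×ˢ Icc 0 1)
      (S ×ˢ J) := fun z hz => ⟨hz.1.1, hJconv.smul_mem_of_zero_mem h0 hz.1.2 hz.2⟩
  exact contDiffOn_intervalIntegral (hS.prod hJ) (hSconv.prod (.of_convex hJconv))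
    (uniqueDiffOn_Icc zero_lt_one) (uIcc_of_le zero_le_one).subset
    ((contDiffOn_dirDerivWithin (hS.prod hJ) (0, 1) hf).comp (by fun_prop) hmaps)

end Hadamard

section Rescaling

theorem iteratedDerivWithin_Ici_eq_Ico {F : Type*} [NormedAddCommGroup F] [NormedSpace ℝ F]
    (g : ℝ → F) {a r s : ℝ} (hs : s < r) (ℓ : ℕ) :
    iteratedDerivWithin ℓ g (Ici a) s = iteratedDerivWithin ℓ g (Ico a r) s := by
  rw [iteratedDerivWithin, iteratedDerivWithin, ← Ici_inter_Iio,
    iteratedFDerivWithin_inter_open isOpen_Iio hs]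

variable {X P F : Type*} [NormedAddCommGroup X] [NormedSpace ℝ X] [NormedAddCommGroup P]
  [NormedSpace ℝ P] [NormedAddCommGroup F] [NormedSpace ℝ F] {V : Set X} {I : Set P} {R k : ℝ}
  {f : X × ℝ × P → F} {p : P}

theorem iteratedDerivWithin_rescale (hV : UniqueDiffOn ℝ V) (hI : UniqueDiffOn ℝ I)
    (hf : ContDiffOn ℝ ∞ f (V ×ˢ Ico 0 R ×ˢ I)) (hk : 0 < k) (hp : p ∈ I) {x : X} (hx : x ∈ V)
    {g : ℝ → F} (hg : ∀ s ∈ Ico 0 (R / k), g s = f (x, k * s, p)) (ℓ : ℕ) {s : ℝ}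
    (hs : s ∈ Ico 0 (R / k)) :
    iteratedDerivWithin ℓ g (Ici 0) s =
      k ^ ℓ • (dirDerivWithin (V ×ˢ Ico 0 R ×ˢ I) (0, 1, 0))^[ℓ] f (x, k * s, p) := by
  have hmaps : MapsTo (fun s => (x, k * s, p)) (Ico 0 (R / k)) (V ×ˢ Ico 0 R ×ˢ I) := fun s hs =>
    ⟨hx, ⟨mul_nonneg hk.le hs.1, (lt_div_iff₀' hk).1 hs.2⟩, hp⟩
  have hline : ∀ s ∈ Ico 0 (R / k), HasDerivWithinAt (fun s => (x, k * s, p))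
      (k • ((0, 1, 0) : X × ℝ × P)) (Ico 0 (R / k)) s := fun s _ => by
    simpa using (hasDerivWithinAt_const s _ x).prodMk
      (((hasDerivWithinAt_id s _).const_mul k).prodMk (hasDerivWithinAt_const s _ p))
  rw [iteratedDerivWithin_Ici_eq_Ico g hs.2, iteratedDerivWithin_congr hg hs]
  exact iteratedDerivWithin_comp_eq_pow_smul_dirDerivWithin
    (hV.prod ((uniqueDiffOn_Ico 0 R).prod hI)) (uniqueDiffOn_Ico _ _) hf hmaps hline ℓ hs

theorem norm_iteratedFDeriv_iteratedDerivWithin_rescale_le (hV : IsOpen V) (hI : UniqueDiffOn ℝ I)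
    (hf : ContDiffOn ℝ ∞ f (V ×ˢ Ico 0 R ×ˢ I)) (hk : 0 < k) (hp : p ∈ I) {g : X → ℝ → F}
    (hg : ∀ y ∈ V, ∀ s ∈ Ico 0 (R / k), g y s = f (y, k * s, p)) (m ℓ : ℕ) {x : X} (hx : x ∈ V)
    {s : ℝ} (hs : s ∈ Ico 0 (R / k)) :
    ‖iteratedFDeriv ℝ m (fun y => iteratedDerivWithin ℓ (g y) (Ici 0) s) x‖ ≤
      k ^ ℓ * ‖iteratedFDerivWithin ℝ m
        ((dirDerivWithin (V ×ˢ Ico 0 R ×ˢ I) (0, 1, 0))^[ℓ] f) (V ×ˢ Ico 0 R ×ˢ I)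
        (x, k * s, p)‖ := by
  set D := (dirDerivWithin (V ×ˢ Ico 0 R ×ˢ I) (0, 1, 0))^[ℓ] f
  have hRI : UniqueDiffOn ℝ (Ico 0 R ×ˢ I) := (uniqueDiffOn_Ico 0 R).prod hI
  have hD : ContDiffOn ℝ ∞ D (V ×ˢ Ico 0 R ×ˢ I) :=
    contDiffOn_iterate_dirDerivWithin (hV.uniqueDiffOn.prod hRI) _ hf ℓ
  have hmem : (k * s, p) ∈ Ico 0 R ×ˢ I :=
    ⟨⟨mul_nonneg hk.le hs.1, (lt_div_iff₀' hk).1 hs.2⟩, hp⟩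
  have heq : EqOn (fun y => iteratedDerivWithin ℓ (g y) (Ici 0) s)
      (k ^ ℓ • fun y => D (y, k * s, p)) V := fun y hy =>
    iteratedDerivWithin_rescale hV.uniqueDiffOn hI hf hk hp hy (hg y hy) ℓ hs
  rw [← iteratedFDerivWithin_of_isOpen m hV hx, iteratedFDerivWithin_congr heq hx,
    iteratedFDerivWithin_const_smul_apply
      ((contDiffOn_slice hD hmem x hx).of_le (by exact_mod_cast le_top)) hV.uniqueDiffOn hx,
    norm_smul, Real.norm_of_nonneg (pow_nonneg hk.le ℓ)]
  gcongr
  exact norm_iteratedFDerivWithin_slice_le hV.uniqueDiffOn hRI hD hx hmem m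

theorem SmoothBoundedOn.exists_bound_rescale {ι : Type*} {J : Set ι} {f : ι → X × ℝ × P → F}
    (hV : IsOpen V) (hI : UniqueDiffOn ℝ I) (hIcomp : IsCompact I)
    (hf : SmoothBoundedOn J f (V ×ˢ Ico 0 R ×ˢ I)) {K : Set X} (hK : IsCompact K) (hKV : K ⊆ V)
    {C : ℝ} (hCR : C < R) (m ℓ : ℕ) :
    ∃ M > 0, ∀ i ∈ J, ∀ k > 0, ∀ p ∈ I, ∀ g : X → ℝ → F,
      (∀ y ∈ V, ∀ s ∈ Ico 0 (R / k), g y s = f i (y, k * s, p)) → ∀ x ∈ K, ∀ s, 0 ≤ s → s ≤ C / k →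
      ‖iteratedFDeriv ℝ m (fun y => iteratedDerivWithin ℓ (g y) (Ici 0) s) x‖ ≤ M * k ^ ℓ := by
  have hDf := hf.iterate_dirDerivWithin
    (hV.uniqueDiffOn.prod ((uniqueDiffOn_Ico 0 R).prod hI)) (0, 1, 0) ℓ
  obtain ⟨M, hM⟩ := hDf.exists_bound (K ×ˢ Icc 0 C ×ˢ I)
    (prod_mono hKV (prod_mono_left (Icc_subset_Ico_right hCR)))
    (hK.prod (isCompact_Icc.prod hIcomp)) m
  refine ⟨max 1 M, by positivity, fun i hi k hk p hp g hg x hx s hs hsC => ?_⟩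
  have hks : k * s ∈ Icc 0 C := ⟨mul_nonneg hk.le hs, (le_div_iff₀' hk).1 hsC⟩
  refine (norm_iteratedFDeriv_iteratedDerivWithin_rescale_le hV hI (hf.contDiffOn i hi) hk hp hg m ℓ
    (hKV hx) ⟨hs, hsC.trans_lt (by gcongr)⟩).trans ?_
  rw [mul_comm]
  gcongr
  exact (hM i hi _ ⟨hx, hks, hp⟩).trans (le_max_right _ _)

end Rescaling

section RescaledIntegral

variable {X : Type*} {V : Set X} {δ₁ δ₂ d R : ℝ} {h : X × ℝ → ℂ}

/-- The integral `B_k` in the variables `(x, σ, ε)` with `σ = k s` and `ε = 1 / k`, the phase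
being factored as `τ (x, s) = s * h (x, s)`; it makes sense for independent `σ` and `ε`,
including `ε = 0`. -/
noncomputable def rescaledIntegral (δ₁ δ₂ : ℝ) (h : X × ℝ → ℂ) (a : X × ℝ × ℝ → ℂ)
    (q : X × ℝ × ℝ) : ℂ :=
  ∫ t in δ₁..δ₂, Complex.exp (-(t * q.2.1) * h (q.1, q.2.2 * q.2.1)) * a (q.1, q.2.2 * q.2.1, t)

theorem integral_exp_mul_eq_rescaledIntegral {τ : X × ℝ → ℂ} {x : X} {s k : ℝ}
    (hτ : τ (x, s) = s • h (x, s)) (hk : k ≠ 0) (a : X × ℝ × ℝ → ℂ) :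
    ∫ t in δ₁..δ₂, Complex.exp (-(k * t) * τ (x, s)) * a (x, s, t) =
      rescaledIntegral δ₁ δ₂ h a (x, k * s, k⁻¹) := by
  refine intervalIntegral.integral_congr fun t _ => ?_
  simp only [inv_mul_cancel_left₀ hk, hτ, Complex.real_smul, Complex.ofReal_mul]
  ring_nf

theorem mul_mem_Ico_of_mem_Icc_div {σ ε : ℝ} (hσ : σ ∈ Ico 0 R) (hε : ε ∈ Icc 0 (d / R))
    (hd : 0 < d) : ε * σ ∈ Ico 0 d := by
  have hR : 0 < R := hσ.1.trans_lt hσ.2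
  refine ⟨mul_nonneg hε.1 hσ.1, ?_⟩
  calc ε * σ ≤ d / R * σ := mul_le_mul_of_nonneg_right hε.2 hσ.1
    _ < d / R * R := mul_lt_mul_of_pos_left hσ.2 (by positivity)
    _ = d := div_mul_cancel₀ d hR.ne'

variable [NormedAddCommGroup X] [NormedSpace ℝ X]

theorem contDiffOn_exp_rescaled_phase (hd : 0 < d) (hh : ContDiffOn ℝ ∞ h (V ×ˢ Ico 0 d)) :
    ContDiffOn ℝ ∞ (fun z : (X × ℝ × ℝ) × ℝ =>
      Complex.exp (-(z.2 * z.1.2.1) * h (z.1.1, z.1.2.2 * z.1.2.1)))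
      ((V ×ˢ Ico 0 R ×ˢ Icc 0 (d / R)) ×ˢ univ) := by
  have hfactor : ContDiffOn ℝ ∞ (fun z : (X × ℝ × ℝ) × ℝ => h (z.1.1, z.1.2.2 * z.1.2.1))
      ((V ×ˢ Ico 0 R ×ˢ Icc 0 (d / R)) ×ˢ univ) :=
    hh.comp (f := fun z : (X × ℝ × ℝ) × ℝ => (z.1.1, z.1.2.2 * z.1.2.1)) (by fun_prop)
      fun z hz => ⟨hz.1.1, mul_mem_Ico_of_mem_Icc_div hz.1.2.1 hz.1.2.2 hd⟩
  have hofReal : ContDiff ℝ ∞ Complex.ofReal := Complex.ofRealCLM.contDiff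
  have hcoeff : ContDiff ℝ ∞ fun z : (X × ℝ × ℝ) × ℝ => -((z.2 : ℂ) * z.1.2.1) := by fun_prop
  exact (hcoeff.contDiffOn.mul hfactor).cexp

theorem smoothBoundedOn_rescaledIntegral {ι : Type*} {J : Set ι} {a : ι → X × ℝ × ℝ → ℂ}
    (hV : IsOpen V) (hd : 0 < d) (hR : 0 < R) (hh : ContDiffOn ℝ ∞ h (V ×ˢ Ico 0 d))
    (ha : SmoothBoundedOn J a (V ×ˢ Ico 0 d ×ˢ univ)) :
    SmoothBoundedOn J (fun i => rescaledIntegral δ₁ δ₂ h (a i))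
      (V ×ˢ Ico 0 R ×ˢ Icc 0 (d / R)) := by
  have hIco (r : ℝ) : UniqueDiffOn ℝ (Ico 0 r) := uniqueDiffOn_Ico 0 r
  have hW : UniqueDiffOn ℝ (V ×ˢ Ico 0 R ×ˢ Icc 0 (d / R)) :=
    hV.uniqueDiffOn.prod ((hIco R).prod (uniqueDiffOn_Icc (by positivity)))
  have hWconv : IsLocallyConvexSet (V ×ˢ Ico 0 R ×ˢ Icc 0 (d / R)) :=
    (IsLocallyConvexSet.of_isOpen hV).prod (.of_convex ((convex_Ico 0 R).prod (convex_Icc _ _)))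
  have hWu := hW.prod (uniqueDiffOn_univ (𝕜 := ℝ) (E := ℝ))
  have hexp := contDiffOn_exp_rescaled_phase (R := R) hd hh
  have hamp := ha.comp_right (φ := fun z : (X × ℝ × ℝ) × ℝ => (z.1.1, z.1.2.2 * z.1.2.1, z.2))
    hWu (hV.uniqueDiffOn.prod ((hIco d).prod uniqueDiffOn_univ)) (by fun_prop)
    fun z hz => ⟨hz.1.1, mul_mem_Ico_of_mem_Icc_div hz.1.2.1 hz.1.2.2 hd, trivial⟩
  exact ((SmoothBoundedOn.of_contDiffOn hWu hexp).mul hWu hamp).intervalIntegral hW hWconv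
    uniqueDiffOn_univ (subset_univ _)

end RescaledIntegral

theorem stmt4_general {X : Type*} [NormedAddCommGroup X] [NormedSpace ℝ X] {V K : Set X}
    (hV : IsOpen V) (hK : IsCompact K) (hKV : K ⊆ V) {d : ℝ} (hd : 0 < d) (δ₁ δ₂ : ℝ)
    {τ : X × ℝ → ℂ} (hτ0 : ∀ x ∈ V, τ (x, 0) = 0) (hτ : ContDiffOn ℝ ∞ τ (V ×ˢ Ico 0 d))
    {a : ℝ → X × ℝ × ℝ → ℂ} (ha : SmoothBoundedOn (Ici 1) a (V ×ˢ Ico 0 d ×ˢ univ)) (C : ℝ) :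
    ∃ k₀ ≥ 1, ∀ m ℓ : ℕ, ∃ C' > 0, ∀ k ≥ k₀, ∀ x ∈ K, ∀ s : ℝ, 0 ≤ s → s ≤ C / k →
      ‖iteratedFDeriv ℝ m (fun y => iteratedDerivWithin ℓ (fun s' =>
        ∫ t in δ₁..δ₂, Complex.exp (-(k * t) * τ (y, s')) * a k (y, s', t)) (Ici 0) s) x‖ ≤
        C' * k ^ ℓ := by
  obtain ⟨h, hh, hτh⟩ := exists_contDiffOn_eq_smul_of_eq_zero hV.uniqueDiffOn
    (.of_isOpen hV) (uniqueDiffOn_Ico 0 d) (convex_Ico 0 d) (left_mem_Ico.2 hd) hτ hτ0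
  obtain ⟨R, hR, hCR⟩ : ∃ R > 0, C < R := ⟨max 1 (C + 1), by positivity, by simp⟩
  have hεI : UniqueDiffOn ℝ (Icc 0 (d / R)) := uniqueDiffOn_Icc (by positivity)
  have hF := smoothBoundedOn_rescaledIntegral (δ₁ := δ₁) (δ₂ := δ₂) hV hd hR hh ha
  refine ⟨max 1 (R / d), le_max_left _ _, fun m ℓ => ?_⟩
  obtain ⟨M, hM₀, hM⟩ := hF.exists_bound_rescale hV hεI isCompact_Icc hK hKV hCR m ℓ
  refine ⟨M, hM₀, fun k hk x hx s hs hsC => ?_⟩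
  have hk₁ : 1 ≤ k := (le_max_left _ _).trans hk
  have hk₀ : 0 < k := by linarith
  have hRd : R / d ≤ k := (le_max_right _ _).trans hk
  have hRk : R / k ≤ d := (div_le_comm₀ hk₀ hd).2 hRd
  have hε : k⁻¹ ∈ Icc 0 (d / R) :=
    ⟨by positivity, inv_le_of_inv_le₀ (by positivity) ((inv_div d R).trans_le hRd)⟩
  exact hM k hk₁ k hk₀ k⁻¹ hε _ (fun y hy s' hs' => integral_exp_mul_eq_rescaledIntegral
    (hτh y hy s' ⟨hs'.1, hs'.2.trans_le hRk⟩) hk₀.ne' (a k)) x hx s hs hsC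

/-- **Statement 2.** With the phase `τ`, amplitudes `a₀, a₁` and
`B_k(x,s) = ∫_{δ₁}^{δ₂} e^{-ktτ(x,s)} (a₀(x,s,t) + a₁(x,s,t,k)) dt` as in the context,
given `C > 0` there is `k₀ > 0` such that for every multi-index `α` (formalized through
the order `i = |α|` of the full iterated derivative in `x`) and every `ℓ ∈ ℕ` there is
`C_{α,ℓ} > 0` with `|∂_x^α (∂/∂s)^ℓ B_k(x,s)| ≤ C_{α,ℓ} k^ℓ` for all `k ≥ k₀`, `x ∈ U`,
`0 ≤ s ≤ C k⁻²` (the `s`-derivative is taken within `[0,∞)`, up to the boundary). -/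
theorem stmt4 {n : ℕ} (hn : 1 ≤ n)
    (U V : Set (Fin n → ℝ)) (hUopen : IsOpen U) (hVopen : IsOpen V)
    (hUcpt : IsCompact (closure U)) (hUV : closure U ⊆ V)
    (c δ₁ δ₂ : ℝ) (hc : 0 < c) (hδ₁ : 0 < δ₁) (hδ : δ₁ < δ₂)
    (τ : (Fin n → ℝ) → ℝ → ℂ)
    (a₀ : (Fin n → ℝ) → ℝ → ℝ → ℂ)
    (a₁ : (Fin n → ℝ) → ℝ → ℝ → ℝ → ℂ)
    (hτ0 : ∀ x ∈ V, τ x 0 = 0)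
    (hτre : ∀ x ∈ V, ∀ s ∈ Ico (0:ℝ) (2*c), 0 ≤ (τ x s).re)
    (hτsmooth : ContDiffOn ℝ (⊤ : ℕ∞) (fun p : (Fin n → ℝ) × ℝ => τ p.1 p.2)
      (V ×ˢ Ico 0 (2*c)))
    (ha₀smooth : ContDiffOn ℝ (⊤ : ℕ∞)
      (fun p : (Fin n → ℝ) × ℝ × ℝ => a₀ p.1 p.2.1 p.2.2)
      (V ×ˢ Ico 0 (2*c) ×ˢ univ))
    (ha₁smooth : ∀ k : ℝ, 0 < k → ContDiffOn ℝ (⊤ : ℕ∞)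
      (fun p : (Fin n → ℝ) × ℝ × ℝ => a₁ p.1 p.2.1 p.2.2 k)
      (V ×ˢ Ico 0 (2*c) ×ˢ univ))
    (ha₁O : ∀ K ⊆ (V ×ˢ Ico (0:ℝ) (2*c) ×ˢ (univ : Set ℝ)), IsCompact K →
      ∀ m : ℕ, ∃ C > (0:ℝ), ∀ i ≤ m, ∀ p ∈ K, ∀ k : ℝ, 1 ≤ k →
        ‖iteratedFDerivWithin ℝ i
          (fun q : (Fin n → ℝ) × ℝ × ℝ => a₁ q.1 q.2.1 q.2.2 k)
          (V ×ˢ Ico 0 (2*c) ×ˢ univ) p‖ ≤ C / k)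
    (B : ℝ → (Fin n → ℝ) → ℝ → ℂ)
    (hB : ∀ k x s, B k x s =
      ∫ t in δ₁..δ₂, Complex.exp (-((k : ℂ) * (t : ℂ)) * τ x s)
        * (a₀ x s t + a₁ x s t k))
    (C : ℝ) (hC : 0 < C) :
    ∃ k₀ > (0:ℝ), ∀ i ℓ : ℕ, ∃ C' > (0:ℝ), ∀ k ≥ k₀, ∀ x ∈ U, ∀ s : ℝ,
      0 ≤ s → s ≤ C / k^2 →
      ‖iteratedFDeriv ℝ i
        (fun y => iteratedDerivWithin ℓ (fun s' => B k y s') (Ici 0) s) x‖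
        ≤ C' * k ^ ℓ := by
  have hS : UniqueDiffOn ℝ (V ×ˢ Ico 0 (2 * c) ×ˢ (univ : Set ℝ)) :=
    hVopen.uniqueDiffOn.prod ((uniqueDiffOn_Ico _ _).prod uniqueDiffOn_univ)
  have ha := (SmoothBoundedOn.of_contDiffOn (J := Ici 1) hS ha₀smooth).add hS
    (.of_norm_le_div (fun k hk => ha₁smooth k (zero_lt_one.trans_le hk)) ha₁O)
  obtain ⟨k₀, hk₀, hbound⟩ :=
    stmt4_general hVopen hUcpt hUV (by positivity) δ₁ δ₂ hτ0 hτsmooth ha C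
  refine ⟨k₀, by linarith, fun i ℓ => (hbound i ℓ).imp fun C' ⟨hC', hle⟩ =>
    ⟨hC', fun k hk x hx s hs hsC => ?_⟩⟩
  have hk1 : 1 ≤ k := hk₀.trans hk
  have hCk : C / k ^ 2 ≤ C / k := by gcongr; exact le_self_pow₀ hk1 two_ne_zero
  simpa only [hB] using hle k hk x (subset_closure hx) s hs (hsC.trans hCk)
end

section
/- With the notation of the context, let k₀ > 0 and let {φ_k}_{k ≥ k₀} be a family of smooth functions φ_k : V → (0,c) such that φ_k = O(k^{-2}) in C^∞-topology on V (for every compact K ⊆ V and every m ∈ ℕ there is C > 0 with all partial derivatives of φ_k of order ≤ m bounded by C·k^{-2} on K for all k ≥ k₀). Define b_k : V → ℂ by b_k(x) = B_k(x, φ_k(x)) and b₀ : V → ℂ by b₀(x) = ∫_{δ₁}^{δ₂} a₀(x,0,t) dt. Then b_k = b₀ + O(k^{-1}) in C^∞-topology on U, i.e. for every compact K ⊆ U and every m ∈ ℕ there is C' > 0 such that all partial derivatives of b_k − b₀ of order ≤ m are bounded in norm by C'·k^{-1} on K, for all sufficiently large k. -/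
open Set

/-!
Since `τ (x, 0) = 0` and `φ_k = O(k⁻²)`, Hadamard's formula
`g (Φ) - g (Ψ) = ∫₀¹ g' (Ψ + θ (Φ - Ψ)) (Φ - Ψ) dθ` makes the phase `k t τ (x, φ_k x)` of size
`O(k⁻¹)` in the `C^∞` topology, so that its exponential is `1 + O(k⁻¹)`; by the same formula
`a₀ (x, φ_k x, t) - a₀ (x, 0, t) = O(k⁻²)`. Each of these relations survives sums, products,
composition with families of maps that are bounded in `C^∞`, and integration in `t`.
-/

open Filter Asymptotics Metric
open scoped ContDiff

theorem curryLeft_compContinuousLinearMap {𝕜 E E' F : Type*} [NontriviallyNormedField 𝕜]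
    [NormedAddCommGroup E] [NormedSpace 𝕜 E] [NormedAddCommGroup E'] [NormedSpace 𝕜 E']
    [NormedAddCommGroup F] [NormedSpace 𝕜 F] {m : ℕ}
    (M : ContinuousMultilinearMap 𝕜 (fun _ : Fin (m + 1) ↦ E') F) (g : E →L[𝕜] E') :
    (M.compContinuousLinearMap fun _ ↦ g).curryLeft =
      ((ContinuousMultilinearMap.compContinuousLinearMapL fun _ ↦ g).comp M.curryLeft).comp g := by
  ext v w
  exact congrArg M (funext fun i ↦ by cases i using Fin.cases <;> rfl)

section ParametricIntegral

variable {E F : Type*} [NormedAddCommGroup E] [NormedSpace ℝ E] [LocallyCompactSpace E]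
  [NormedAddCommGroup F] [NormedSpace ℝ F] {s : Set E} {x : E} {a b : ℝ} {f : E × ℝ → F}

theorem hasFDerivAt_intervalIntegral_of_continuousOn (hs : IsOpen s)
    {f' : E × ℝ → E × ℝ →L[ℝ] F}
    (hf : ∀ p ∈ s ×ˢ uIcc a b, HasFDerivWithinAt f (f' p) (s ×ˢ uIcc a b) p)
    (hf' : ContinuousOn f' (s ×ˢ uIcc a b)) (hx : x ∈ s) :
    HasFDerivAt (fun y ↦ ∫ t in a..b, f (y, t))
      (∫ t in a..b, (f' (x, t)).comp (.inl ℝ E ℝ)) x := by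
  obtain ⟨K, hK, hxK, hKs⟩ := exists_compact_subset hs hx
  obtain ⟨C, hC⟩ := (hK.prod isCompact_uIcc).exists_bound_of_continuousOn
    ((hf'.mono (prod_mono_left hKs)).clm_comp
      (continuousOn_const (c := ContinuousLinearMap.inl ℝ E ℝ)))
  have hslice : ∀ y ∈ s, MapsTo (fun t ↦ (y, t)) (uIcc a b) (s ×ˢ uIcc a b) :=
    fun y hy t ht ↦ ⟨hy, ht⟩
  have hint : ∀ y ∈ s, IntervalIntegrable (fun t ↦ f (y, t)) MeasureTheory.volume a b :=
    fun y hy ↦ (ContinuousOn.comp (fun p hp ↦ (hf p hp).continuousWithinAt)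
      (by fun_prop) (hslice y hy)).intervalIntegrable
  have hint' : IntervalIntegrable (fun t ↦ (f' (x, t)).comp (.inl ℝ E ℝ))
      MeasureTheory.volume a b :=
    ((hf'.comp (by fun_prop) (hslice x hx)).clm_comp continuousOn_const).intervalIntegrable
  refine intervalIntegral.hasFDerivAt_integral_of_dominated_of_fderiv_le
    (F' := fun y t ↦ (f' (y, t)).comp (.inl ℝ E ℝ)) (bound := fun _ ↦ C)
    (isOpen_interior.mem_nhds hxK) ?_ (hint x hx)
    hint'.def'.aestronglyMeasurable ?_ intervalIntegrable_const ?_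
  · filter_upwards [hs.mem_nhds hx] with y hy using (hint y hy).def'.aestronglyMeasurable
  · exact .of_forall fun t ht y hy ↦ hC (y, t) ⟨interior_subset hy, uIoc_subset_uIcc ht⟩
  · refine .of_forall fun t ht y hy ↦ ?_
    have hys : y ∈ s := hKs (interior_subset hy)
    have ht' : t ∈ uIcc a b := uIoc_subset_uIcc ht
    exact ((hf (y, t) ⟨hys, ht'⟩).comp y (hasFDerivAt_prodMk_left y t).hasFDerivWithinAt
      fun z (hz : z ∈ s) ↦ mk_mem_prod hz ht').hasFDerivAt (hs.mem_nhds hys)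

theorem intervalIntegral_continuousLinearEquiv_comp {G H : Type*} [NormedAddCommGroup G]
    [NormedSpace ℝ G] [NormedAddCommGroup H] [NormedSpace ℝ H] (L : G ≃L[ℝ] H) (g : ℝ → G) :
    ∫ t in a..b, L (g t) = L (∫ t in a..b, g t) := by
  simp only [intervalIntegral, L.integral_comp_comm, map_sub]

theorem hasFTaylorSeriesUpToOn_intervalIntegral_s5 (hs : IsOpen s)
    {p : E × ℝ → FormalMultilinearSeries ℝ (E × ℝ) F}
    (hf : HasFTaylorSeriesUpToOn ∞ f p (s ×ˢ uIcc a b)) :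
    HasFTaylorSeriesUpToOn ∞ (fun x ↦ ∫ t in a..b, f (x, t))
      (fun x m ↦ ∫ t in a..b, (p (x, t) m).compContinuousLinearMap fun _ ↦ .inl ℝ E ℝ) s := by
  have hderiv : ∀ m : ℕ, ∀ x ∈ s, HasFDerivAt
      (fun x ↦ ∫ t in a..b, (p (x, t) m).compContinuousLinearMap fun _ ↦ .inl ℝ E ℝ)
      (∫ t in a..b,
        (p (x, t) (m + 1)).compContinuousLinearMap fun _ ↦ .inl ℝ E ℝ).curryLeft x := by
    intro m x hx
    let L := ContinuousMultilinearMap.compContinuousLinearMapL (F := F)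
      fun _ : Fin m ↦ ContinuousLinearMap.inl ℝ E ℝ
    have hcurry : ContinuousOn (fun q ↦ L.comp (p q (m + 1)).curryLeft) (s ×ˢ uIcc a b) :=
      continuousOn_const.clm_comp ((continuousMultilinearCurryLeftEquiv ℝ
        (fun _ : Fin (m + 1) ↦ E × ℝ) F).continuous.comp_continuousOn
          (hf.cont (m + 1) (mod_cast le_top)))
    refine (hasFDerivAt_intervalIntegral_of_continuousOn hs (fun q hq ↦
      L.hasFDerivAt.comp_hasFDerivWithinAt q
        (hf.fderivWithin m (mod_cast WithTop.coe_lt_top m) q hq)) hcurry hx).congr_fderiv ?_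
    refine Eq.trans ?_ (intervalIntegral_continuousLinearEquiv_comp
      (G := ContinuousMultilinearMap ℝ (fun _ : Fin (m + 1) ↦ E) F)
      (H := E →L[ℝ] ContinuousMultilinearMap ℝ (fun _ : Fin m ↦ E) F)
      (continuousMultilinearCurryLeftEquiv ℝ
        (fun _ : Fin (m + 1) ↦ E) F).toContinuousLinearEquiv _)
    exact intervalIntegral.integral_congr fun t _ ↦ (curryLeft_compContinuousLinearMap _ _).symm
  refine ⟨fun x hx ↦ ?_, fun m _ x hx ↦ (hderiv m x hx).hasFDerivWithinAt,
    fun m _ x hx ↦ (hderiv m x hx).continuousAt.continuousWithinAt⟩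
  refine (intervalIntegral_continuousLinearEquiv_comp
    (continuousMultilinearCurryFin0 ℝ E F).toContinuousLinearEquiv _).symm.trans
      (intervalIntegral.integral_congr fun t ht ↦ ?_)
  exact (congrArg (p (x, t) 0) (Subsingleton.elim _ _)).trans (hf.zero_eq (x, t) ⟨hx, ht⟩)

theorem norm_iteratedFDerivWithin_intervalIntegral_le (hs : IsOpen s) {t : Set (E × ℝ)}
    (ht : UniqueDiffOn ℝ t) (hst : s ×ˢ uIcc a b ⊆ t) (hf : ContDiffOn ℝ ∞ f t) (hx : x ∈ s)
    {i : ℕ} {C : ℝ} (hC : ∀ θ ∈ uIcc a b, ‖iteratedFDerivWithin ℝ i f t (x, θ)‖ ≤ C) :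
    ‖iteratedFDerivWithin ℝ i (fun x ↦ ∫ t in a..b, f (x, t)) s x‖ ≤ C * |b - a| := by
  have hseries := hasFTaylorSeriesUpToOn_intervalIntegral_s5 hs ((hf.ftaylorSeriesWithin ht).mono hst)
  rw [← hseries.eq_iteratedFDerivWithin_of_uniqueDiffOn (mod_cast le_top) hs.uniqueDiffOn hx]
  refine intervalIntegral.norm_integral_le_of_norm_le_const fun θ hθ ↦ ?_
  refine (ContinuousMultilinearMap.norm_compContinuousLinearMap_le _ _).trans ?_
  grw [Finset.prod_le_one (fun _ _ ↦ norm_nonneg _)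
    fun _ _ ↦ ContinuousLinearMap.norm_inl_le_one ℝ E ℝ, mul_one]
  exact hC θ (uIoc_subset_uIcc hθ)

theorem contDiffOn_intervalIntegral_s5 (hs : IsOpen s) {t : Set (E × ℝ)}
    (ht : UniqueDiffOn ℝ t) (hst : s ×ˢ uIcc a b ⊆ t) (hf : ContDiffOn ℝ ∞ f t) :
    ContDiffOn ℝ ∞ (fun x ↦ ∫ t in a..b, f (x, t)) s :=
  (hasFTaylorSeriesUpToOn_intervalIntegral_s5 hs ((hf.ftaylorSeriesWithin ht).mono hst)).contDiffOn

end ParametricIntegral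

theorem integral_fderivWithin_lineMap {E F : Type*} [NormedAddCommGroup E] [NormedSpace ℝ E]
    [NormedAddCommGroup F] [NormedSpace ℝ F] [CompleteSpace F] {f : E → F} {s : Set E} {x y : E}
    (hf : ContDiffOn ℝ 1 f s) (hs : UniqueDiffOn ℝ s)
    (hxy : MapsTo (AffineMap.lineMap x y : ℝ → E) (Icc 0 1) s) :
    ∫ θ in (0 : ℝ)..1, fderivWithin ℝ f s (AffineMap.lineMap x y θ) (y - x) = f y - f x := by
  have hcont : ContinuousOn
      (fun θ : ℝ ↦ fderivWithin ℝ f s (AffineMap.lineMap x y θ) (y - x)) (Icc 0 1) :=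
    ((hf.continuousOn_fderivWithin hs le_rfl).comp
      AffineMap.lineMap_continuous.continuousOn hxy).clm_apply continuousOn_const
  rw [intervalIntegral.integral_eq_sub_of_hasDerivAt_of_le (f := f ∘ AffineMap.lineMap x y)
    zero_le_one (hf.continuousOn.comp AffineMap.lineMap_continuous.continuousOn hxy) ?_
    (hcont.intervalIntegrable_of_Icc zero_le_one)]
  · simp
  · intro θ hθ
    have hmem := hxy (Ioo_subset_Icc_self hθ)
    exact ((hf.differentiableOn one_ne_zero _ hmem).hasFDerivWithinAt.comp_hasDerivWithinAt θ
      AffineMap.hasDerivWithinAt_lineMap hxy).hasDerivAt (Icc_mem_nhds hθ.1 hθ.2)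

section MapsCompactly

variable {ι E F G : Type*} [TopologicalSpace E] [TopologicalSpace F] [TopologicalSpace G]
  {l : Filter ι} {s : Set E} {t : Set F}

/-- The maps `Φ k : s → t` send each compact subset of `s` into a compact subset of `t` which does
not depend on `k`, for `k` far along `l`. These are the inner maps through which `IsSmoothBigO`
can be composed. -/
structure MapsCompactly (l : Filter ι) (Φ : ι → E → F) (s : Set E) (t : Set F) : Prop where
  mapsTo : ∀ᶠ k in l, MapsTo (Φ k) s t
  exists_isCompact : ∀ K ⊆ s, IsCompact K →
    ∃ K' ⊆ t, IsCompact K' ∧ ∀ᶠ k in l, MapsTo (Φ k) K K'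

theorem mapsCompactly_of_continuousOn {Φ : E → F} (hΦ : ContinuousOn Φ s) (hst : MapsTo Φ s t) :
    MapsCompactly l (fun _ ↦ Φ) s t where
  mapsTo := .of_forall fun _ ↦ hst
  exists_isCompact K hKs hK := ⟨Φ '' K, (hst.mono_left hKs).image_subset,
    hK.image_of_continuousOn (hΦ.mono hKs), .of_forall fun _ ↦ mapsTo_image Φ K⟩

theorem mapsCompactly_of_isCompact {Φ : ι → E → F} {K : Set F} (hK : IsCompact K) (hKt : K ⊆ t)
    (hΦ : ∀ᶠ k in l, MapsTo (Φ k) s K) : MapsCompactly l Φ s t where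
  mapsTo := hΦ.mono fun _ h ↦ h.mono_right hKt
  exists_isCompact _ hs _ := ⟨K, hKt, hK, hΦ.mono fun _ h ↦ h.mono_left hs⟩

theorem MapsCompactly.prodMk {Φ : ι → E → F} {Ψ : ι → E → G} {u : Set G}
    (hΦ : MapsCompactly l Φ s t) (hΨ : MapsCompactly l Ψ s u) :
    MapsCompactly l (fun k x ↦ (Φ k x, Ψ k x)) s (t ×ˢ u) where
  mapsTo := by
    filter_upwards [hΦ.mapsTo, hΨ.mapsTo] with k hΦk hΨk x hx using ⟨hΦk hx, hΨk hx⟩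
  exists_isCompact K hKs hK := by
    obtain ⟨K₁, hK₁t, hK₁, hΦK₁⟩ := hΦ.exists_isCompact K hKs hK
    obtain ⟨K₂, hK₂u, hK₂, hΨK₂⟩ := hΨ.exists_isCompact K hKs hK
    refine ⟨K₁ ×ˢ K₂, prod_mono hK₁t hK₂u, hK₁.prod hK₂, ?_⟩
    filter_upwards [hΦK₁, hΨK₂] with k hΦk hΨk x hx using ⟨hΦk hx, hΨk hx⟩

end MapsCompactly

section IsSmoothBigO

variable {ι E F G H : Type*} [NormedAddCommGroup E] [NormedSpace ℝ E] [NormedAddCommGroup F]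
  [NormedSpace ℝ F] [NormedAddCommGroup G] [NormedSpace ℝ G] [NormedAddCommGroup H]
  [NormedSpace ℝ H] {l : Filter ι} {s : Set E} {t : Set F} {r r' : ι → ℝ}

/-- `f k = O(r k)` along `l` in the `C^∞` topology on `s`: the functions `f k` are eventually
smooth on `s`, and every derivative of `f k` is `O(r k)` uniformly on compact subsets of `s`.
Derivatives are taken within `s`, so that `s` may contain boundary points. -/
structure IsSmoothBigO (l : Filter ι) (s : Set E) (f : ι → E → F) (r : ι → ℝ) : Prop where
  contDiffOn : ∀ᶠ k in l, ContDiffOn ℝ ∞ (f k) s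
  bound : ∀ K ⊆ s, IsCompact K → ∀ i : ℕ, ∃ C : ℝ, ∀ᶠ k in l, ∀ x ∈ K,
    ‖iteratedFDerivWithin ℝ i (f k) s x‖ ≤ C * ‖r k‖

theorem IsSmoothBigO.exists_pos_bound {f : ι → E → F} (hf : IsSmoothBigO l s f r) {K : Set E}
    (hKs : K ⊆ s) (hK : IsCompact K) (m : ℕ) :
    ∃ C > 0, ∀ᶠ k in l, ∀ i ≤ m, ∀ x ∈ K,
      ‖iteratedFDerivWithin ℝ i (f k) s x‖ ≤ C * ‖r k‖ := by
  choose C hC using hf.bound K hKs hK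
  refine ⟨1 + ∑ i ∈ Finset.range (m + 1), |C i|, by positivity, ?_⟩
  filter_upwards [(eventually_all_finset (Finset.range (m + 1))).2 fun i _ ↦ hC i]
    with k hk i hi x hx
  have him : i ∈ Finset.range (m + 1) := Finset.mem_range_succ_iff.2 hi
  have hsum : |C i| ≤ ∑ i ∈ Finset.range (m + 1), |C i| :=
    Finset.single_le_sum (f := fun i ↦ |C i|) (fun _ _ ↦ abs_nonneg _) him
  refine (hk i him x hx).trans ?_
  gcongr
  linarith [le_abs_self (C i)]

theorem IsSmoothBigO.congr {f g : ι → E → F} (hf : IsSmoothBigO l s f r)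
    (h : ∀ᶠ k in l, EqOn (g k) (f k) s) : IsSmoothBigO l s g r where
  contDiffOn := by filter_upwards [hf.contDiffOn, h] with k hk hgf using hk.congr hgf
  bound K hKs hK i := by
    obtain ⟨C, hC⟩ := hf.bound K hKs hK i
    refine ⟨C, ?_⟩
    filter_upwards [hC, h] with k hk hgf x hx
    rw [iteratedFDerivWithin_congr hgf (hKs hx) i]
    exact hk x hx

theorem IsSmoothBigO.trans_isBigO {f : ι → E → F} (hf : IsSmoothBigO l s f r)
    (hr : r =O[l] r') : IsSmoothBigO l s f r' where
  contDiffOn := hf.contDiffOn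
  bound K hKs hK i := by
    obtain ⟨C, hC, hbound⟩ := hf.exists_pos_bound hKs hK i
    obtain ⟨D, hD⟩ := hr.bound
    refine ⟨C * D, ?_⟩
    filter_upwards [hbound, hD] with k hk hrk x hx
    grw [hk i le_rfl x hx, hrk, mul_assoc]

theorem isSmoothBigO_one_of_contDiffOn {f : E → F} (hs : UniqueDiffOn ℝ s)
    (hf : ContDiffOn ℝ ∞ f s) : IsSmoothBigO l s (fun _ ↦ f) fun _ ↦ 1 where
  contDiffOn := .of_forall fun _ ↦ hf
  bound K hKs hK i := by
    obtain ⟨C, hC⟩ := hK.exists_bound_of_continuousOn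
      ((hf.continuousOn_iteratedFDerivWithin (mod_cast le_top) hs (m := i)).mono hKs)
    exact ⟨C, .of_forall fun _ x hx ↦ by simpa using hC x hx⟩

theorem IsSmoothBigO.add {f g : ι → E → F} (hs : UniqueDiffOn ℝ s)
    (hf : IsSmoothBigO l s f r) (hg : IsSmoothBigO l s g r) :
    IsSmoothBigO l s (fun k x ↦ f k x + g k x) r where
  contDiffOn := by filter_upwards [hf.contDiffOn, hg.contDiffOn] with k hf hg using hf.add hg
  bound K hKs hK i := by
    obtain ⟨C, hC⟩ := hf.bound K hKs hK i
    obtain ⟨D, hD⟩ := hg.bound K hKs hK i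
    refine ⟨C + D, ?_⟩
    filter_upwards [hf.contDiffOn, hg.contDiffOn, hC, hD] with k hfk hgk hfC hgD x hx
    have hi : (i : WithTop ℕ∞) ≤ ∞ := mod_cast le_top
    have hadd := iteratedFDerivWithin_add_apply ((hfk x (hKs hx)).of_le hi)
      ((hgk x (hKs hx)).of_le hi) hs (hKs hx)
    rw [add_mul]
    exact (congrArg norm hadd).trans_le (norm_add_le_of_le (hfC x hx) (hgD x hx))

theorem IsSmoothBigO.const_smul {f : ι → E → F} (hs : UniqueDiffOn ℝ s)
    (hf : IsSmoothBigO l s f r) (c : ι → ℝ) :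
    IsSmoothBigO l s (fun k x ↦ c k • f k x) fun k ↦ c k * r k where
  contDiffOn := by filter_upwards [hf.contDiffOn] with k hk using hk.const_smul (c k)
  bound K hKs hK i := by
    obtain ⟨C, hC⟩ := hf.bound K hKs hK i
    refine ⟨C, ?_⟩
    filter_upwards [hf.contDiffOn, hC] with k hfk hfC x hx
    have hsmul := iteratedFDerivWithin_const_smul_apply (a := c k)
      ((hfk x (hKs hx)).of_le (mod_cast le_top : (i : WithTop ℕ∞) ≤ ∞)) hs (hKs hx)
    calc ‖iteratedFDerivWithin ℝ i (fun x ↦ c k • f k x) s x‖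
        = ‖c k‖ * ‖iteratedFDerivWithin ℝ i (f k) s x‖ :=
          (congrArg norm hsmul).trans (norm_smul _ _)
      _ ≤ ‖c k‖ * (C * ‖r k‖) := by gcongr; exact hfC x hx
      _ = C * ‖c k * r k‖ := by rw [norm_mul, mul_left_comm]

theorem IsSmoothBigO.continuousLinearMap_comp {f : ι → E → F} (L : F →L[ℝ] G)
    (hs : UniqueDiffOn ℝ s) (hf : IsSmoothBigO l s f r) :
    IsSmoothBigO l s (fun k x ↦ L (f k x)) r where
  contDiffOn := by filter_upwards [hf.contDiffOn] with k hk using hk.continuousLinearMap_comp L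
  bound K hKs hK i := by
    obtain ⟨C, hC⟩ := hf.bound K hKs hK i
    refine ⟨‖L‖ * C, ?_⟩
    filter_upwards [hf.contDiffOn, hC] with k hfk hfC x hx
    refine (L.norm_iteratedFDerivWithin_comp_left (hfk x (hKs hx)) hs (hKs hx)
      (mod_cast le_top)).trans ?_
    grw [hfC x hx, mul_assoc]

theorem IsSmoothBigO.sub {f g : ι → E → F} (hs : UniqueDiffOn ℝ s)
    (hf : IsSmoothBigO l s f r) (hg : IsSmoothBigO l s g r) :
    IsSmoothBigO l s (fun k x ↦ f k x - g k x) r := by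
  simpa [sub_eq_add_neg] using hf.add hs (hg.continuousLinearMap_comp (-.id ℝ F) hs)

theorem IsSmoothBigO.bilinear {f : ι → E → F} {g : ι → E → G} (B : F →L[ℝ] G →L[ℝ] H)
    (hs : UniqueDiffOn ℝ s) (hf : IsSmoothBigO l s f r) (hg : IsSmoothBigO l s g r') :
    IsSmoothBigO l s (fun k x ↦ B (f k x) (g k x)) fun k ↦ r k * r' k where
  contDiffOn := by
    filter_upwards [hf.contDiffOn, hg.contDiffOn] with k hfk hgk
    exact B.isBoundedBilinearMap.contDiff.comp₂_contDiffOn hfk hgk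
  bound K hKs hK i := by
    obtain ⟨C, hC, hfC⟩ := hf.exists_pos_bound hKs hK i
    obtain ⟨D, -, hgD⟩ := hg.exists_pos_bound hKs hK i
    refine ⟨‖B‖ * ∑ j ∈ Finset.range (i + 1), i.choose j * C * D, ?_⟩
    filter_upwards [hf.contDiffOn, hg.contDiffOn, hfC, hgD] with k hfk hgk hfCk hgDk x hx
    calc ‖iteratedFDerivWithin ℝ i (fun x ↦ B (f k x) (g k x)) s x‖
        ≤ ‖B‖ * ∑ j ∈ Finset.range (i + 1), i.choose j *
            ‖iteratedFDerivWithin ℝ j (f k) s x‖ * ‖iteratedFDerivWithin ℝ (i - j) (g k) s x‖ :=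
          B.norm_iteratedFDerivWithin_le_of_bilinear hfk hgk hs (hKs hx) (mod_cast le_top)
      _ ≤ ‖B‖ * ∑ j ∈ Finset.range (i + 1), i.choose j * (C * ‖r k‖) * (D * ‖r' k‖) := by
          gcongr with j hj
          · exact hfCk j (Finset.mem_range_succ_iff.1 hj) x hx
          · exact hgDk (i - j) (Nat.sub_le i j) x hx
      _ = (‖B‖ * ∑ j ∈ Finset.range (i + 1), i.choose j * C * D) * ‖r k * r' k‖ := by
          simp only [norm_mul, Finset.mul_sum, Finset.sum_mul]
          exact Finset.sum_congr rfl fun j _ ↦ by ring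

theorem IsSmoothBigO.fderivWithin {f : ι → E → F} (hs : UniqueDiffOn ℝ s)
    (hf : IsSmoothBigO l s f r) : IsSmoothBigO l s (fun k ↦ fderivWithin ℝ (f k) s) r where
  contDiffOn := by filter_upwards [hf.contDiffOn] with k hk using hk.fderivWithin hs le_rfl
  bound K hKs hK i := by
    obtain ⟨C, hC⟩ := hf.bound K hKs hK (i + 1)
    refine ⟨C, ?_⟩
    filter_upwards [hC] with k hk x hx
    rw [norm_iteratedFDerivWithin_fderivWithin hs (hKs hx)]
    exact hk x hx

theorem IsSmoothBigO.prodMk {f : ι → E → F} {g : ι → E → G} (hs : UniqueDiffOn ℝ s)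
    (hf : IsSmoothBigO l s f r) (hg : IsSmoothBigO l s g r) :
    IsSmoothBigO l s (fun k x ↦ (f k x, g k x)) r :=
  ((hf.continuousLinearMap_comp (.inl ℝ F G) hs).add hs
    (hg.continuousLinearMap_comp (.inr ℝ F G) hs)).congr (.of_forall fun k x _ ↦ by simp)

theorem IsSmoothBigO.comp {g : ι → F → G} {Φ : ι → E → F} (hs : UniqueDiffOn ℝ s)
    (ht : UniqueDiffOn ℝ t) (hg : IsSmoothBigO l t g r) (hΦ : IsSmoothBigO l s Φ fun _ ↦ 1)
    (hmaps : MapsCompactly l Φ s t) : IsSmoothBigO l s (fun k x ↦ g k (Φ k x)) r where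
  contDiffOn := by
    filter_upwards [hg.contDiffOn, hΦ.contDiffOn, hmaps.mapsTo] with k hgk hΦk hk
    exact hgk.comp hΦk hk
  bound K hKs hK i := by
    obtain ⟨K', hK't, hK', hKK'⟩ := hmaps.exists_isCompact K hKs hK
    obtain ⟨C, -, hgC⟩ := hg.exists_pos_bound hK't hK' i
    obtain ⟨D, hD, hΦD⟩ := hΦ.exists_pos_bound hKs hK i
    refine ⟨i.factorial * C * (1 + D) ^ i, ?_⟩
    filter_upwards [hg.contDiffOn, hΦ.contDiffOn, hmaps.mapsTo, hKK', hgC, hΦD]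
      with k hgk hΦk hk hkK hgCk hΦDk x hx
    have hΦpow : ∀ j : ℕ, 1 ≤ j → j ≤ i →
        ‖iteratedFDerivWithin ℝ j (Φ k) s x‖ ≤ (1 + D) ^ j := fun j hj hji ↦
      calc ‖iteratedFDerivWithin ℝ j (Φ k) s x‖ ≤ D := by simpa using hΦDk j hji x hx
        _ ≤ 1 + D := le_add_of_nonneg_left zero_le_one
        _ ≤ (1 + D) ^ j := le_self_pow₀ (le_add_of_nonneg_right hD.le) (by lia)
    calc ‖iteratedFDerivWithin ℝ i (fun x ↦ g k (Φ k x)) s x‖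
        ≤ i.factorial * (C * ‖r k‖) * (1 + D) ^ i :=
          norm_iteratedFDerivWithin_comp_le hgk hΦk (mod_cast le_top) ht hs hk (hKs hx)
            (fun j hj ↦ hgCk j hj _ (hkK hx)) hΦpow
      _ = i.factorial * C * (1 + D) ^ i * ‖r k‖ := by ring

theorem IsSmoothBigO.intervalIntegral [LocallyCompactSpace E] {a b : ℝ} {f : ι → E × ℝ → F}
    {u : Set (E × ℝ)} (hs : IsOpen s) (hu : UniqueDiffOn ℝ u) (hsu : s ×ˢ uIcc a b ⊆ u)
    (hf : IsSmoothBigO l u f r) : IsSmoothBigO l s (fun k x ↦ ∫ θ in a..b, f k (x, θ)) r where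
  contDiffOn := by
    filter_upwards [hf.contDiffOn] with k hk using contDiffOn_intervalIntegral_s5 hs hu hsu hk
  bound K hKs hK i := by
    obtain ⟨C, hC⟩ := hf.bound (K ×ˢ uIcc a b) ((prod_mono_left hKs).trans hsu)
      (hK.prod isCompact_uIcc) i
    refine ⟨C * |b - a|, ?_⟩
    filter_upwards [hf.contDiffOn, hC] with k hk hkC x hx
    rw [mul_right_comm]
    exact norm_iteratedFDerivWithin_intervalIntegral_le hs hu hsu hk (hKs hx)
      fun θ hθ ↦ hkC (x, θ) ⟨hx, hθ⟩

theorem IsSmoothBigO.mapsCompactly_univ [ProperSpace F] {f : ι → E → F}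
    (hf : IsSmoothBigO l s f fun _ ↦ 1) : MapsCompactly l f s univ where
  mapsTo := .of_forall fun k ↦ mapsTo_univ (f k) s
  exists_isCompact K hKs hK := by
    obtain ⟨C, hC⟩ := hf.bound K hKs hK 0
    refine ⟨closedBall 0 C, subset_univ _, isCompact_closedBall 0 C, ?_⟩
    filter_upwards [hC] with k hk x hx
    simpa using hk x hx

theorem IsSmoothBigO.comp_contDiffOn {g : ι → F → G} {h : E → F} (hs : UniqueDiffOn ℝ s)
    (ht : UniqueDiffOn ℝ t) (hg : IsSmoothBigO l t g r) (hh : ContDiffOn ℝ ∞ h s)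
    (hst : MapsTo h s t) : IsSmoothBigO l s (fun k x ↦ g k (h x)) r :=
  hg.comp hs ht (isSmoothBigO_one_of_contDiffOn hs hh)
    (mapsCompactly_of_continuousOn hh.continuousOn hst)

theorem IsSmoothBigO.lineMap {Φ Ψ : ι → E → F} (hs : UniqueDiffOn ℝ s)
    (hΦ : IsSmoothBigO l s Φ fun _ ↦ 1) (hΨ : IsSmoothBigO l s Ψ fun _ ↦ 1) :
    IsSmoothBigO l (s ×ˢ Icc (0 : ℝ) 1)
      (fun k p ↦ AffineMap.lineMap (Φ k p.1) (Ψ k p.1) p.2) fun _ ↦ 1 := by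
  have hu : UniqueDiffOn ℝ (s ×ˢ Icc (0 : ℝ) 1) := hs.prod (uniqueDiffOn_Icc zero_lt_one)
  have hΦ' := hΦ.comp_contDiffOn hu hs contDiffOn_fst mapsTo_fst_prod
  have hΨ' := hΨ.comp_contDiffOn hu hs contDiffOn_fst mapsTo_fst_prod
  have hsnd : IsSmoothBigO l (s ×ˢ Icc (0 : ℝ) 1) (fun _ p ↦ p.2) fun _ ↦ 1 :=
    isSmoothBigO_one_of_contDiffOn hu contDiffOn_snd
  have hsmul : IsSmoothBigO l (s ×ˢ Icc (0 : ℝ) 1)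
      (fun k p ↦ p.2 • (Ψ k p.1 - Φ k p.1)) fun _ ↦ 1 := by
    simpa using hsnd.bilinear (.lsmul ℝ ℝ) hu (hΨ'.sub hu hΦ')
  exact (hsmul.add hu hΦ').congr
    (.of_forall fun k p _ ↦ AffineMap.lineMap_apply_module' _ _ _)

theorem IsSmoothBigO.comp_sub_comp [LocallyCompactSpace E] [CompleteSpace G] {g : ι → F → G}
    {Φ Ψ : ι → E → F} (hs : IsOpen s) (ht : UniqueDiffOn ℝ t) (hg : IsSmoothBigO l t g r)
    (hΦ : IsSmoothBigO l s Φ fun _ ↦ 1) (hΨ : IsSmoothBigO l s Ψ fun _ ↦ 1)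
    (hsub : IsSmoothBigO l s (fun k x ↦ Ψ k x - Φ k x) r')
    (hmaps : MapsCompactly l (fun k p ↦ AffineMap.lineMap (Φ k p.1) (Ψ k p.1) p.2)
      (s ×ˢ Icc (0 : ℝ) 1) t) :
    IsSmoothBigO l s (fun k x ↦ g k (Ψ k x) - g k (Φ k x)) fun k ↦ r k * r' k := by
  have hu : UniqueDiffOn ℝ (s ×ˢ Icc (0 : ℝ) 1) :=
    hs.uniqueDiffOn.prod (uniqueDiffOn_Icc zero_lt_one)
  have hderiv := (hg.fderivWithin ht).comp hu ht (hΦ.lineMap hs.uniqueDiffOn hΨ) hmaps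
  have hdiff := hsub.comp_contDiffOn hu hs.uniqueDiffOn contDiffOn_fst mapsTo_fst_prod
  have hint := (hderiv.bilinear (.id ℝ (F →L[ℝ] G)) hu hdiff).intervalIntegral hs hu
    (by rw [uIcc_of_le zero_le_one])
  refine hint.congr ?_
  filter_upwards [hg.contDiffOn, hmaps.mapsTo] with k hgk hk x hx
  exact (integral_fderivWithin_lineMap (hgk.of_le (mod_cast le_top)) ht
    fun θ hθ ↦ hk (x := (x, θ)) ⟨hx, hθ⟩).symm

theorem IsSmoothBigO.exp_sub_one [LocallyCompactSpace E] {z : ι → E → ℂ} (hs : IsOpen s)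
    (hz : IsSmoothBigO l s z r) (hr : r =O[l] fun _ ↦ (1 : ℝ)) :
    IsSmoothBigO l s (fun k x ↦ Complex.exp (z k x) - 1) r := by
  have hexp : IsSmoothBigO l univ (fun _ ↦ Complex.exp) fun _ ↦ 1 :=
    isSmoothBigO_one_of_contDiffOn uniqueDiffOn_univ Complex.contDiff_exp.contDiffOn
  have hzero : IsSmoothBigO l s (fun _ _ ↦ (0 : ℂ)) fun _ ↦ 1 :=
    isSmoothBigO_one_of_contDiffOn hs.uniqueDiffOn contDiffOn_const
  have hz1 := hz.trans_isBigO hr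
  have hsub := hz.congr (g := fun k x ↦ z k x - 0) (.of_forall fun k x _ ↦ sub_zero (z k x))
  simpa using hexp.comp_sub_comp hs uniqueDiffOn_univ hzero hz1 hsub
    (hzero.lineMap hs.uniqueDiffOn hz1).mapsCompactly_univ

end IsSmoothBigO

section Substitution

variable {ι E G : Type*} [NormedAddCommGroup E] [NormedSpace ℝ E] [NormedAddCommGroup G]
  [NormedSpace ℝ G] {l : Filter ι} {V : Set E} {r ρ : ι → ℝ} {b c : ℝ} {φ : ι → E → ℝ}

theorem IsSmoothBigO.graph_prod {T : Set ℝ} (hV : UniqueDiffOn ℝ V) (hT : UniqueDiffOn ℝ T)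
    (hφ : IsSmoothBigO l V φ fun _ ↦ 1) :
    IsSmoothBigO l (V ×ˢ T) (fun k p ↦ (p.1, φ k p.1, p.2)) fun _ ↦ 1 :=
  have hu := hV.prod hT
  (isSmoothBigO_one_of_contDiffOn hu contDiffOn_fst).prodMk hu
    ((hφ.comp_contDiffOn hu hV contDiffOn_fst mapsTo_fst_prod).prodMk hu
      (isSmoothBigO_one_of_contDiffOn hu contDiffOn_snd))

theorem IsSmoothBigO.comp_graph {a : ι → E × ℝ × ℝ → G} (hV : UniqueDiffOn ℝ V)
    (ha : IsSmoothBigO l (V ×ˢ Ico 0 b ×ˢ univ) a ρ) (hφ : IsSmoothBigO l V φ fun _ ↦ 1)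
    (hφc : ∀ᶠ k in l, MapsTo (φ k) V (Icc 0 c)) (hcb : c < b) :
    IsSmoothBigO l (V ×ˢ univ) (fun k p ↦ a k (p.1, φ k p.1, p.2)) ρ :=
  ha.comp (hV.prod uniqueDiffOn_univ)
    (hV.prod ((uniqueDiffOn_Ico 0 b).prod uniqueDiffOn_univ)) (hφ.graph_prod hV uniqueDiffOn_univ)
    ((mapsCompactly_of_continuousOn continuousOn_fst mapsTo_fst_prod).prodMk
      ((mapsCompactly_of_isCompact isCompact_Icc (Icc_subset_Ico_right hcb)
        (hφc.mono fun _ h ↦ h.comp mapsTo_fst_prod)).prodMk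
        (mapsCompactly_of_continuousOn continuousOn_snd mapsTo_snd_prod)))

theorem mapsCompactly_lineMap_graph (hφc : ∀ᶠ k in l, MapsTo (φ k) V (Icc 0 c)) (hcb : c < b) :
    MapsCompactly l
      (fun k q ↦ AffineMap.lineMap (q.1.1, (0 : ℝ), q.1.2) (q.1.1, φ k q.1.1, q.1.2) q.2)
      ((V ×ˢ (univ : Set ℝ)) ×ˢ Icc (0 : ℝ) 1) (V ×ˢ Ico 0 b ×ˢ univ) := by
  have hmul : ∀ᶠ k in l, MapsTo (fun q : (E × ℝ) × ℝ ↦ q.2 * φ k q.1.1)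
      ((V ×ˢ (univ : Set ℝ)) ×ˢ Icc (0 : ℝ) 1) (Icc 0 c) := by
    filter_upwards [hφc] with k hk q hq
    have h := hk hq.1.1
    exact ⟨mul_nonneg hq.2.1 h.1, (mul_le_of_le_one_left h.1 hq.2.2).trans h.2⟩
  have hfst : MapsTo (fun q : (E × ℝ) × ℝ ↦ q.1.1)
      ((V ×ˢ (univ : Set ℝ)) ×ˢ Icc (0 : ℝ) 1) V := fun q hq ↦ hq.1.1
  convert (mapsCompactly_of_continuousOn (by fun_prop) hfst).prodMk
    ((mapsCompactly_of_isCompact isCompact_Icc (Icc_subset_Ico_right hcb) hmul).prodMk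
      (mapsCompactly_of_continuousOn (Φ := fun q : (E × ℝ) × ℝ ↦ q.1.2) (by fun_prop)
        (mapsTo_univ _ _))) using 3 with k q
  simp [AffineMap.lineMap_apply_module']

theorem IsSmoothBigO.comp_graph_sub_comp_zero [LocallyCompactSpace E] [CompleteSpace G]
    {a : E × ℝ × ℝ → G} (hV : IsOpen V) (ha : ContDiffOn ℝ ∞ a (V ×ˢ Ico 0 b ×ˢ univ))
    (hφ : IsSmoothBigO l V φ r) (hr : r =O[l] fun _ ↦ (1 : ℝ))
    (hφc : ∀ᶠ k in l, MapsTo (φ k) V (Icc 0 c)) (hcb : c < b) :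
    IsSmoothBigO l (V ×ˢ univ) (fun k p ↦ a (p.1, φ k p.1, p.2) - a (p.1, 0, p.2)) r := by
  have hZ : UniqueDiffOn ℝ (V ×ˢ Ico 0 b ×ˢ (univ : Set ℝ)) :=
    hV.uniqueDiffOn.prod ((uniqueDiffOn_Ico 0 b).prod uniqueDiffOn_univ)
  have hVu : IsOpen (V ×ˢ (univ : Set ℝ)) := hV.prod isOpen_univ
  have hgraph := (hφ.trans_isBigO hr).graph_prod hV.uniqueDiffOn uniqueDiffOn_univ
  have hzero : IsSmoothBigO l (V ×ˢ (univ : Set ℝ)) (fun _ p ↦ (p.1, (0 : ℝ), p.2)) fun _ ↦ 1 :=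
    isSmoothBigO_one_of_contDiffOn hVu.uniqueDiffOn (by fun_prop)
  have hdiff : IsSmoothBigO l (V ×ˢ (univ : Set ℝ))
      (fun k p ↦ (p.1, φ k p.1, p.2) - (p.1, (0 : ℝ), p.2)) r :=
    ((hφ.comp_contDiffOn hVu.uniqueDiffOn hV.uniqueDiffOn contDiffOn_fst
      mapsTo_fst_prod).continuousLinearMap_comp ((ContinuousLinearMap.inr ℝ E (ℝ × ℝ)).comp
        (.inl ℝ ℝ ℝ)) hVu.uniqueDiffOn).congr (.of_forall fun k p _ ↦ by simp)
  simpa using (isSmoothBigO_one_of_contDiffOn hZ ha).comp_sub_comp hVu hZ hzero hgraph hdiff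
    (mapsCompactly_lineMap_graph hφc hcb)

end Substitution

section ExponentialIntegral

variable {ι E : Type*} [NormedAddCommGroup E] [NormedSpace ℝ E] [LocallyCompactSpace E]
  {l : Filter ι} {V : Set E} {κ r ρ : ι → ℝ} {b c δ₁ δ₂ : ℝ} {τ : E × ℝ → ℂ}
  {a₀ : E × ℝ × ℝ → ℂ} {a₁ : ι → E × ℝ × ℝ → ℂ} {φ : ι → E → ℝ}

theorem isSmoothBigO_phase (hV : IsOpen V) (hτ0 : ∀ x ∈ V, τ (x, 0) = 0)
    (hτ : ContDiffOn ℝ ∞ τ (V ×ˢ Ico 0 b)) (hφ : IsSmoothBigO l V φ r)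
    (hφc : ∀ᶠ k in l, MapsTo (φ k) V (Icc 0 c)) (hcb : c < b)
    (hr : r =O[l] fun _ ↦ (1 : ℝ)) :
    IsSmoothBigO l (V ×ˢ (univ : Set ℝ))
      (fun k p ↦ -((κ k : ℂ) * (p.2 : ℂ)) * τ (p.1, φ k p.1)) fun k ↦ κ k * r k := by
  have hW : UniqueDiffOn ℝ (V ×ˢ (univ : Set ℝ)) := hV.uniqueDiffOn.prod uniqueDiffOn_univ
  have hτφ : IsSmoothBigO l (V ×ˢ (univ : Set ℝ)) (fun k p ↦ τ (p.1, φ k p.1)) r :=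
    (hφ.comp_graph_sub_comp_zero (a := fun p ↦ τ (p.1, p.2.1)) hV
      (hτ.comp (by fun_prop) fun p hp ↦ ⟨hp.1, hp.2.1⟩) hr hφc hcb).congr
      (.of_forall fun k p hp ↦ by simp [hτ0 p.1 hp.1])
  have hneg : IsSmoothBigO l (V ×ˢ (univ : Set ℝ)) (fun _ p ↦ -p.2) fun _ ↦ 1 :=
    isSmoothBigO_one_of_contDiffOn hW (by fun_prop)
  have hsmul : IsSmoothBigO l (V ×ˢ (univ : Set ℝ))
      (fun k p ↦ κ k • (-p.2) • τ (p.1, φ k p.1)) fun k ↦ κ k * r k := by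
    simpa using (hneg.bilinear (.lsmul ℝ ℝ) hW hτφ).const_smul hW κ
  refine hsmul.congr (.of_forall fun k p _ ↦ ?_)
  simp only [Complex.real_smul, Complex.ofReal_neg]
  ring

theorem isSmoothBigO_exp_mul_sub (hV : IsOpen V) (hτ0 : ∀ x ∈ V, τ (x, 0) = 0)
    (hτ : ContDiffOn ℝ ∞ τ (V ×ˢ Ico 0 b)) (ha₀ : ContDiffOn ℝ ∞ a₀ (V ×ˢ Ico 0 b ×ˢ univ))
    (ha₁ : IsSmoothBigO l (V ×ˢ Ico 0 b ×ˢ univ) a₁ ρ) (hφ : IsSmoothBigO l V φ r)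
    (hφc : ∀ᶠ k in l, MapsTo (φ k) V (Icc 0 c)) (hcb : c < b)
    (hr : r =O[l] ρ) (hκr : (fun k ↦ κ k * r k) =O[l] ρ) (hρ : ρ =O[l] fun _ ↦ (1 : ℝ)) :
    IsSmoothBigO l (V ×ˢ (univ : Set ℝ)) (fun k p ↦
      Complex.exp (-((κ k : ℂ) * (p.2 : ℂ)) * τ (p.1, φ k p.1)) *
        (a₀ (p.1, φ k p.1, p.2) + a₁ k (p.1, φ k p.1, p.2)) - a₀ (p.1, 0, p.2)) ρ := by
  have hW : IsOpen (V ×ˢ (univ : Set ℝ)) := hV.prod isOpen_univ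
  have hZ : UniqueDiffOn ℝ (V ×ˢ Ico 0 b ×ˢ (univ : Set ℝ)) :=
    hV.uniqueDiffOn.prod ((uniqueDiffOn_Ico 0 b).prod uniqueDiffOn_univ)
  have hφ1 := hφ.trans_isBigO (hr.trans hρ)
  have hexp := ((isSmoothBigO_phase hV hτ0 hτ hφ hφc hcb (hr.trans hρ)).trans_isBigO
    hκr).exp_sub_one hW hρ
  have ha₀φ := (isSmoothBigO_one_of_contDiffOn hZ ha₀).comp_graph hV.uniqueDiffOn hφ1 hφc hcb
  have ha₁φ := ha₁.comp_graph hV.uniqueDiffOn hφ1 hφc hcb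
  have ha₀sub := (hφ.comp_graph_sub_comp_zero hV ha₀ (hr.trans hρ) hφc hcb).trans_isBigO hr
  have hprod := hexp.bilinear (.mul ℝ ℂ) hW.uniqueDiffOn
    (ha₀φ.add hW.uniqueDiffOn (ha₁φ.trans_isBigO hρ))
  simp only [mul_one, ContinuousLinearMap.mul_apply'] at hprod
  refine (hprod.add hW.uniqueDiffOn (ha₀sub.add hW.uniqueDiffOn ha₁φ)).congr
    (.of_forall fun k p _ ↦ ?_)
  ring

theorem isSmoothBigO_integral_exp_mul_sub (hV : IsOpen V) (hτ0 : ∀ x ∈ V, τ (x, 0) = 0)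
    (hτ : ContDiffOn ℝ ∞ τ (V ×ˢ Ico 0 b)) (ha₀ : ContDiffOn ℝ ∞ a₀ (V ×ˢ Ico 0 b ×ˢ univ))
    (ha₁ : IsSmoothBigO l (V ×ˢ Ico 0 b ×ˢ univ) a₁ ρ) (hφ : IsSmoothBigO l V φ r)
    (hφc : ∀ᶠ k in l, MapsTo (φ k) V (Icc 0 c)) (hcb : c < b)
    (hr : r =O[l] ρ) (hκr : (fun k ↦ κ k * r k) =O[l] ρ) (hρ : ρ =O[l] fun _ ↦ (1 : ℝ)) :
    IsSmoothBigO l V (fun k x ↦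
      (∫ t in δ₁..δ₂, Complex.exp (-((κ k : ℂ) * (t : ℂ)) * τ (x, φ k x)) *
        (a₀ (x, φ k x, t) + a₁ k (x, φ k x, t))) - ∫ t in δ₁..δ₂, a₀ (x, 0, t)) ρ := by
  have hdiff := isSmoothBigO_exp_mul_sub hV hτ0 hτ ha₀ ha₁ hφ hφc hcb hr hκr hρ
  refine (hdiff.intervalIntegral (a := δ₁) (b := δ₂) hV (hV.uniqueDiffOn.prod uniqueDiffOn_univ)
    (prod_mono_right (subset_univ _))).congr ?_
  filter_upwards [hdiff.contDiffOn, hφc] with k hk hφk x hx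
  have hzero : (0 : ℝ) ∈ Ico 0 b := ⟨le_rfl, ((hφk hx).1.trans (hφk hx).2).trans_lt hcb⟩
  have hdiff_int := ContinuousOn.intervalIntegrable (μ := MeasureTheory.volume)
    (hk.continuousOn.comp (f := fun t : ℝ ↦ (x, t)) (s := uIcc δ₁ δ₂)
      (by fun_prop) fun t _ ↦ ⟨hx, mem_univ t⟩)
  have ha₀_int := ContinuousOn.intervalIntegrable (μ := MeasureTheory.volume)
    (ha₀.continuousOn.comp (f := fun t : ℝ ↦ (x, (0 : ℝ), t)) (s := uIcc δ₁ δ₂)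
      (by fun_prop) fun t _ ↦ ⟨hx, hzero, mem_univ t⟩)
  simpa [Function.comp_def, sub_eq_iff_eq_add] using intervalIntegral.integral_add hdiff_int ha₀_int

end ExponentialIntegral

section AtTop

variable {E F : Type*} [NormedAddCommGroup E] [NormedSpace ℝ E] [NormedAddCommGroup F]
  [NormedSpace ℝ F] {s : Set E} {f : ℝ → E → F} {q : ℝ → ℝ}

theorem isSmoothBigO_atTop_inv {k₀ : ℝ} (hf : ∀ᶠ k in atTop, ContDiffOn ℝ ∞ (f k) s)
    (hbound : ∀ K ⊆ s, IsCompact K → ∀ m : ℕ, ∃ C > (0 : ℝ), ∀ i ≤ m, ∀ x ∈ K, ∀ k ≥ k₀,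
      ‖iteratedFDerivWithin ℝ i (f k) s x‖ ≤ C / q k) :
    IsSmoothBigO atTop s f fun k ↦ (q k)⁻¹ where
  contDiffOn := hf
  bound K hKs hK i := by
    obtain ⟨C, hC, hbound⟩ := hbound K hKs hK i
    refine ⟨C, ?_⟩
    filter_upwards [eventually_ge_atTop k₀] with k hk x hx
    grw [hbound i le_rfl x hx k hk, div_eq_mul_inv, ← Real.le_norm_self]

theorem IsSmoothBigO.exists_forall_ge_le_div (hf : IsSmoothBigO atTop s f fun k ↦ k⁻¹)
    (hs : IsOpen s) {K : Set E} (hKs : K ⊆ s) (hK : IsCompact K) (m : ℕ) (k₀ : ℝ) :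
    ∃ C > (0 : ℝ), ∃ k₁ ≥ k₀, ∀ i ≤ m, ∀ x ∈ K, ∀ k ≥ k₁,
      ‖iteratedFDeriv ℝ i (f k) x‖ ≤ C / k := by
  obtain ⟨C, hC, hbound⟩ := hf.exists_pos_bound hKs hK m
  obtain ⟨k₁, hk₁, hk⟩ :=
    (atTop_basis' k₀).eventually_iff.1 (hbound.and (eventually_ge_atTop (0 : ℝ)))
  refine ⟨C, hC, k₁, hk₁, fun i hi x hx k hkk ↦ ?_⟩
  rw [← iteratedFDerivWithin_of_isOpen i hs (hKs hx), div_eq_mul_inv,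
    ← Real.norm_of_nonneg (inv_nonneg.2 (hk hkk).2)]
  exact (hk hkk).1 i hi x hx

end AtTop

theorem stmt5_general {E : Type*} [NormedAddCommGroup E] [NormedSpace ℝ E] [LocallyCompactSpace E]
    {V : Set E} (hV : IsOpen V) {b c δ₁ δ₂ : ℝ} (hcb : c < b) {τ : E → ℝ → ℂ}
    {a₀ : E → ℝ → ℝ → ℂ} {a₁ : E → ℝ → ℝ → ℝ → ℂ} (hτ0 : ∀ x ∈ V, τ x 0 = 0)
    (hτ : ContDiffOn ℝ ∞ (fun p : E × ℝ ↦ τ p.1 p.2) (V ×ˢ Ico 0 b))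
    (ha₀ : ContDiffOn ℝ ∞ (fun p : E × ℝ × ℝ ↦ a₀ p.1 p.2.1 p.2.2) (V ×ˢ Ico 0 b ×ˢ univ))
    (ha₁ : ∀ k : ℝ, 0 < k → ContDiffOn ℝ ∞
      (fun p : E × ℝ × ℝ ↦ a₁ p.1 p.2.1 p.2.2 k) (V ×ˢ Ico 0 b ×ˢ univ))
    (ha₁O : ∀ K ⊆ V ×ˢ Ico (0 : ℝ) b ×ˢ (univ : Set ℝ), IsCompact K →
      ∀ m : ℕ, ∃ C > (0 : ℝ), ∀ i ≤ m, ∀ p ∈ K, ∀ k : ℝ, 1 ≤ k →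
        ‖iteratedFDerivWithin ℝ i (fun q : E × ℝ × ℝ ↦ a₁ q.1 q.2.1 q.2.2 k)
          (V ×ˢ Ico 0 b ×ˢ univ) p‖ ≤ C / k)
    {k₀ : ℝ} {φ : ℝ → E → ℝ} (hφ : ∀ k ≥ k₀, ContDiffOn ℝ ∞ (φ k) V)
    (hφc : ∀ k ≥ k₀, ∀ x ∈ V, φ k x ∈ Icc 0 c)
    (hφO : ∀ K ⊆ V, IsCompact K → ∀ m : ℕ, ∃ C > (0 : ℝ), ∀ i ≤ m, ∀ x ∈ K, ∀ k ≥ k₀,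
      ‖iteratedFDeriv ℝ i (φ k) x‖ ≤ C / k ^ 2) :
    ∀ K ⊆ V, IsCompact K → ∀ m : ℕ, ∃ C > (0 : ℝ), ∃ k₁ ≥ k₀, ∀ i ≤ m, ∀ x ∈ K, ∀ k ≥ k₁,
      ‖iteratedFDeriv ℝ i (fun y ↦
        (∫ t in δ₁..δ₂, Complex.exp (-((k : ℂ) * (t : ℂ)) * τ y (φ k y)) *
          (a₀ y (φ k y) t + a₁ y (φ k y) t k)) - ∫ t in δ₁..δ₂, a₀ y 0 t) x‖ ≤ C / k := by
  intro K hKV hK m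
  have ha₁' := isSmoothBigO_atTop_inv (q := fun k ↦ k)
    ((eventually_gt_atTop 0).mono ha₁) ha₁O
  have hφ' : IsSmoothBigO atTop V φ fun k ↦ (k ^ 2)⁻¹ :=
    isSmoothBigO_atTop_inv ((eventually_ge_atTop k₀).mono hφ) fun K hKV hK m ↦ by
      obtain ⟨C, hC, h⟩ := hφO K hKV hK m
      refine ⟨C, hC, fun i hi x hx k hk ↦ ?_⟩
      rw [iteratedFDerivWithin_of_isOpen i hV (hKV hx)]
      exact h i hi x hx k hk
  have hinv : (fun k : ℝ ↦ k⁻¹) =O[atTop] fun _ ↦ (1 : ℝ) :=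
    tendsto_inv_atTop_zero.isBigO_one ℝ
  have hsq : (fun k : ℝ ↦ (k ^ 2)⁻¹) =O[atTop] fun k ↦ k⁻¹ := by
    simpa [sq] using hinv.mul (isBigO_refl (fun k : ℝ ↦ k⁻¹) atTop)
  have hmul : (fun k : ℝ ↦ k * (k ^ 2)⁻¹) =O[atTop] fun k ↦ k⁻¹ :=
    (isBigO_refl (fun k : ℝ ↦ k⁻¹) atTop).congr_left fun k ↦ by field_simp
  have hmain := isSmoothBigO_integral_exp_mul_sub (δ₁ := δ₁) (δ₂ := δ₂) (κ := fun k ↦ k) hV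
    hτ0 hτ ha₀ ha₁' hφ' ((eventually_ge_atTop k₀).mono hφc) hcb hsq hmul hinv
  exact hmain.exists_forall_ge_le_div hV hKV hK m k₀

/-- **Statement 2.** With the phase `τ`, amplitudes `a₀, a₁` and
`B_k(x,s) = ∫_{δ₁}^{δ₂} e^{-ktτ(x,s)} (a₀(x,s,t) + a₁(x,s,t,k)) dt` as in the context,
let `{φ_k}_{k ≥ k₀}` be a family of smooth functions `φ_k : V → (0,c)` with
`φ_k = O(k⁻²)` in `C^∞`-topology on `V`. Then `b_k(x) := B_k(x, φ_k(x))` satisfies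
`b_k = b₀ + O(k⁻¹)` in `C^∞`-topology on `U`, where `b₀(x) = ∫_{δ₁}^{δ₂} a₀(x,0,t) dt`. -/
theorem stmt5 {n : ℕ} (hn : 1 ≤ n)
    (U V : Set (Fin n → ℝ)) (hUopen : IsOpen U) (hVopen : IsOpen V)
    (hUcpt : IsCompact (closure U)) (hUV : closure U ⊆ V)
    (c δ₁ δ₂ : ℝ) (hc : 0 < c) (hδ₁ : 0 < δ₁) (hδ : δ₁ < δ₂)
    (τ : (Fin n → ℝ) → ℝ → ℂ)
    (a₀ : (Fin n → ℝ) → ℝ → ℝ → ℂ)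
    (a₁ : (Fin n → ℝ) → ℝ → ℝ → ℝ → ℂ)
    (hτ0 : ∀ x ∈ V, τ x 0 = 0)
    (hτre : ∀ x ∈ V, ∀ s ∈ Ico (0:ℝ) (2*c), 0 ≤ (τ x s).re)
    (hτsmooth : ContDiffOn ℝ (⊤ : ℕ∞) (fun p : (Fin n → ℝ) × ℝ => τ p.1 p.2)
      (V ×ˢ Ico 0 (2*c)))
    (ha₀smooth : ContDiffOn ℝ (⊤ : ℕ∞)
      (fun p : (Fin n → ℝ) × ℝ × ℝ => a₀ p.1 p.2.1 p.2.2)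
      (V ×ˢ Ico 0 (2*c) ×ˢ univ))
    (ha₁smooth : ∀ k : ℝ, 0 < k → ContDiffOn ℝ (⊤ : ℕ∞)
      (fun p : (Fin n → ℝ) × ℝ × ℝ => a₁ p.1 p.2.1 p.2.2 k)
      (V ×ˢ Ico 0 (2*c) ×ˢ univ))
    (ha₁O : ∀ K ⊆ (V ×ˢ Ico (0:ℝ) (2*c) ×ˢ (univ : Set ℝ)), IsCompact K →
      ∀ m : ℕ, ∃ C > (0:ℝ), ∀ i ≤ m, ∀ p ∈ K, ∀ k : ℝ, 1 ≤ k →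
        ‖iteratedFDerivWithin ℝ i
          (fun q : (Fin n → ℝ) × ℝ × ℝ => a₁ q.1 q.2.1 q.2.2 k)
          (V ×ˢ Ico 0 (2*c) ×ˢ univ) p‖ ≤ C / k)
    (B : ℝ → (Fin n → ℝ) → ℝ → ℂ)
    (hB : ∀ k x s, B k x s =
      ∫ t in δ₁..δ₂, Complex.exp (-((k : ℂ) * (t : ℂ)) * τ x s)
        * (a₀ x s t + a₁ x s t k))
    (k₀ : ℝ) (hk₀ : 0 < k₀)
    (φ : ℝ → (Fin n → ℝ) → ℝ)
    (hφsmooth : ∀ k ≥ k₀, ContDiffOn ℝ (⊤ : ℕ∞) (φ k) V)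
    (hφrange : ∀ k ≥ k₀, ∀ x ∈ V, φ k x ∈ Ioo 0 c)
    (hφO : ∀ K ⊆ V, IsCompact K → ∀ m : ℕ, ∃ C > (0:ℝ), ∀ i ≤ m, ∀ x ∈ K,
      ∀ k ≥ k₀, ‖iteratedFDeriv ℝ i (φ k) x‖ ≤ C / k^2) :
    ∀ K ⊆ U, IsCompact K → ∀ m : ℕ, ∃ C' > (0:ℝ), ∃ k₁ ≥ k₀,
      ∀ i ≤ m, ∀ x ∈ K, ∀ k ≥ k₁,
        ‖iteratedFDeriv ℝ i
          (fun y => B k y (φ k y) - ∫ t in δ₁..δ₂, a₀ y 0 t) x‖ ≤ C' / k := by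
  intro K hKU hK
  simpa only [hB] using stmt5_general hVopen (by linarith : c < 2 * c) hτ0 hτsmooth ha₀smooth
    ha₁smooth ha₁O hφsmooth (fun k hk x hx ↦ Ioo_subset_Icc_self (hφrange k hk x hx)) hφO K
    (hKU.trans (subset_closure.trans hUV)) hK
end

section
/- Let n ≥ 1, let U ⊆ ℝⁿ be open, let C > 0 and k₀ ≥ 1, and for each k ≥ k₀ let H_k : U × ℝ → ℝ and φ_k : U → ℝ be smooth (C^∞) functions such that |φ_k(x)| ≤ C·k^{-2} and H_k(x, φ_k(x)) = 1 for all x ∈ U and k ≥ k₀. Assume: (a) for every multi-index α ∈ ℕ₀ⁿ and every ℓ ∈ ℕ₀ there is a constant C_{α,ℓ} > 0 such that |∂_x^α (∂/∂s)^ℓ H_k(x,s)| ≤ C_{α,ℓ}·k^ℓ for all k ≥ k₀, x ∈ U and |s| ≤ C·k^{-2}; (b) if moreover |α| ≥ 1, then |∂_x^α (∂/∂s)^ℓ H_k(x,s)| ≤ C_{α,ℓ}·k^{ℓ−1} on the same set; (c) |(∂/∂s) H_k(x,s)| ≥ k/C for all k ≥ k₀, x ∈ U and |s| ≤ C·k^{-2}.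 Then for every multi-index α ∈ ℕ₀ⁿ with |α| ≥ 1 there is a constant C'_α > 0 such that |∂_x^α φ_k(x)| ≤ C'_α·k^{-2} for all x ∈ U and all k ≥ k₀. -/
open Set

open Asymptotics Filter Function Topology
open scoped ContDiff

/-
Write `w` for the scale of `∂ₛH` and `r` for the size of the `x`-derivatives of `H`; in the theorem
`w = k` and `r = k⁻¹`.  Differentiating `H(x, φ(x)) = c` gives `Dφ = -(∂ₛH)⁻¹ • DₓH` along the graph
of `φ`, so that `Dφ = O(r / w)`.  Each `x`-derivative of a function `F(x, φ(x))` falls either on the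
first argument or produces a factor `∂ₛF · Dφ`, in which the loss `w` of `∂ₛ` is compensated by
`Dφ = O(w⁻¹)`.  Hence bounds on the derivatives of `Dφ` of order `< N` control the derivatives of
`(∂ₛH)⁻¹ • DₓH` along the graph up to order `N`, and the formula for `Dφ` closes an induction on
`N`.
-/

section PartialDerivatives

variable {𝕜 E V : Type*} [NontriviallyNormedField 𝕜] [NormedAddCommGroup E] [NormedSpace 𝕜 E]
  [NormedAddCommGroup V] [NormedSpace 𝕜 V] {U : Set E} {F : E → 𝕜 → V} {φ : E → 𝕜} {x : E} {s : 𝕜}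

lemma fderiv_left_eq_comp_inl (hF : DifferentiableAt 𝕜 (uncurry F) (x, s)) :
    fderiv 𝕜 (fun y => F y s) x =
      (fderiv 𝕜 (uncurry F) (x, s)).comp (ContinuousLinearMap.inl 𝕜 E 𝕜) :=
  (HasFDerivAt.comp (g := uncurry F) (f := fun y => (y, s)) x hF.hasFDerivAt
    (hasFDerivAt_prodMk_left x s)).fderiv

lemma deriv_right_eq_fderiv_uncurry (hF : DifferentiableAt 𝕜 (uncurry F) (x, s)) :
    deriv (F x) s = fderiv 𝕜 (uncurry F) (x, s) (0, 1) :=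
  (hF.hasFDerivAt.comp_hasDerivAt s ((hasDerivAt_const s x).prodMk (hasDerivAt_id s))).deriv

lemma fderiv_comp_graph (hF : DifferentiableAt 𝕜 (uncurry F) (x, φ x))
    (hφ : DifferentiableAt 𝕜 φ x) :
    fderiv 𝕜 (fun y => F y (φ y)) x =
      fderiv 𝕜 (fun y => F y (φ x)) x + (fderiv 𝕜 φ x).smulRight (deriv (F x) (φ x)) := by
  have chain : fderiv 𝕜 (fun y => F y (φ y)) x = (fderiv 𝕜 (uncurry F) (x, φ x)).comp
      ((ContinuousLinearMap.id 𝕜 E).prod (fderiv 𝕜 φ x)) :=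
    (HasFDerivAt.comp (g := uncurry F) x hF.hasFDerivAt
      ((hasFDerivAt_id x).prodMk hφ.hasFDerivAt)).fderiv
  rw [chain, fderiv_left_eq_comp_inl hF, deriv_right_eq_fderiv_uncurry hF]
  ext v
  simp [← map_smul, ← map_add]

lemma fderiv_eq_of_comp_graph_eventuallyEq_const {F : E → 𝕜 → 𝕜} {c : 𝕜}
    (hF : DifferentiableAt 𝕜 (uncurry F) (x, φ x)) (hφ : DifferentiableAt 𝕜 φ x)
    (hc : (fun y => F y (φ y)) =ᶠ[𝓝 x] fun _ => c) (hne : deriv (F x) (φ x) ≠ 0) :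
    fderiv 𝕜 φ x = -((deriv (F x) (φ x))⁻¹ • fderiv 𝕜 (fun y => F y (φ x)) x) := by
  have hzero := fderiv_comp_graph hF hφ
  rw [hc.fderiv_eq, fderiv_fun_const, Pi.zero_apply, eq_comm, add_eq_zero_iff_eq_neg] at hzero
  rw [hzero]
  ext v
  simp only [neg_apply, smul_apply, ContinuousLinearMap.smulRight_apply, smul_eq_mul]
  field_simp

lemma deriv_fderiv_left_comm [IsRCLikeNormedField 𝕜] (hF : ContDiffAt 𝕜 2 (uncurry F) (x, s)) :
    deriv (fun t => fderiv 𝕜 (fun y => F y t) x) s = fderiv 𝕜 (fun y => deriv (F y) s) x := by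
  have hdiff : ∀ᶠ p in 𝓝 (x, s), DifferentiableAt 𝕜 (uncurry F) p :=
    (hF.eventually (by simp)).mono fun p hp => hp.differentiableAt (by simp)
  have hleft : (fun t => fderiv 𝕜 (fun y => F y t) x) =ᶠ[𝓝 s] fun t =>
      (fderiv 𝕜 (uncurry F) (x, t)).comp (ContinuousLinearMap.inl 𝕜 E 𝕜) :=
    ((Continuous.prodMk_right x).tendsto s |>.eventually hdiff).mono
      fun t ht => fderiv_left_eq_comp_inl ht
  have hright : (fun y => deriv (F y) s) =ᶠ[𝓝 x] fun y => fderiv 𝕜 (uncurry F) (y, s) (0, 1) :=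
    ((Continuous.prodMk_left s).tendsto x |>.eventually hdiff).mono
      fun y hy => deriv_right_eq_fderiv_uncurry hy
  have hsecond : HasFDerivAt (fderiv 𝕜 (uncurry F)) (fderiv 𝕜 (fderiv 𝕜 (uncurry F)) (x, s))
      (x, s) :=
    ((hF.fderiv_right (m := 1) (by norm_num)).differentiableAt (by simp)).hasFDerivAt
  have hleft' := (hsecond.comp_hasDerivAt s
    ((hasDerivAt_const s x).prodMk (hasDerivAt_id s))).clm_comp
      (hasDerivAt_const s (ContinuousLinearMap.inl 𝕜 E 𝕜))
  have hright' := (HasFDerivAt.comp (g := fderiv 𝕜 (uncurry F)) x hsecond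
    (hasFDerivAt_prodMk_left x s)).clm_apply
    (hasFDerivAt_const ((0 : E), (1 : 𝕜)) x)
  rw [hleft.deriv_eq, hright.fderiv_eq]
  refine hleft'.deriv.trans (Eq.trans ?_ hright'.fderiv.symm)
  have hsymm : IsSymmSndFDerivAt 𝕜 (uncurry F) (x, s) := hF.isSymmSndFDerivAt (by simp)
  ext v
  simpa using hsymm.eq (0, 1) (v, 0)

lemma differentiableAt_uncurry (hU : IsOpen U) (hF : ContDiffOn 𝕜 ∞ (uncurry F) (U ×ˢ univ))
    (hx : x ∈ U) : DifferentiableAt 𝕜 (uncurry F) (x, s) :=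
  (hF.contDiffAt ((hU.prod isOpen_univ).mem_nhds ⟨hx, mem_univ s⟩)).differentiableAt (by simp)

lemma contDiffOn_fderiv_left (hU : IsOpen U) (hF : ContDiffOn 𝕜 ∞ (uncurry F) (U ×ˢ univ)) :
    ContDiffOn 𝕜 ∞ (uncurry fun x s => fderiv 𝕜 (fun y => F y s) x) (U ×ˢ univ) :=
  ((hF.fderiv_of_isOpen (hU.prod isOpen_univ) (by simp)).clm_comp
    (contDiffOn_const (c := ContinuousLinearMap.inl 𝕜 E 𝕜))).congr
      fun _ hp => fderiv_left_eq_comp_inl (differentiableAt_uncurry hU hF hp.1)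

lemma contDiffOn_deriv_right (hU : IsOpen U) (hF : ContDiffOn 𝕜 ∞ (uncurry F) (U ×ˢ univ)) :
    ContDiffOn 𝕜 ∞ (uncurry fun x => deriv (F x)) (U ×ˢ univ) :=
  ((hF.fderiv_of_isOpen (hU.prod isOpen_univ) (by simp)).clm_apply
    (contDiffOn_const (c := ((0 : E), (1 : 𝕜))))).congr
      fun _ hp => deriv_right_eq_fderiv_uncurry (differentiableAt_uncurry hU hF hp.1)

lemma contDiffOn_comp_graph (hF : ContDiffOn 𝕜 ∞ (uncurry F) (U ×ˢ univ))
    (hφ : ContDiffOn 𝕜 ∞ φ U) : ContDiffOn 𝕜 ∞ (fun x => F x (φ x)) U :=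
  hF.comp (contDiffOn_id.prodMk hφ) fun _ hx => ⟨hx, mem_univ _⟩

lemma iteratedDeriv_fderiv_left_comm [IsRCLikeNormedField 𝕜] (hU : IsOpen U)
    (hF : ContDiffOn 𝕜 ∞ (uncurry F) (U ×ˢ univ)) (hx : x ∈ U) (ℓ : ℕ) (s : 𝕜) :
    iteratedDeriv ℓ (fun t => fderiv 𝕜 (fun y => F y t) x) s =
      fderiv 𝕜 (fun y => iteratedDeriv ℓ (F y) s) x := by
  induction ℓ generalizing F with
  | zero => simp only [iteratedDeriv_zero]
  | succ ℓ ih =>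
    have hcomm : deriv (fun t => fderiv 𝕜 (fun y => F y t) x) =
        fun t => fderiv 𝕜 (fun y => deriv (F y) t) x := funext fun t =>
      deriv_fderiv_left_comm <|
        (hF.contDiffAt ((hU.prod isOpen_univ).mem_nhds ⟨hx, mem_univ t⟩)).of_le
          ENat.LEInfty.out
    simp only [iteratedDeriv_succ', hcomm, ih (contDiffOn_deriv_right hU hF)]

lemma norm_iteratedFDeriv_iteratedDeriv_fderiv_left [IsRCLikeNormedField 𝕜] (hU : IsOpen U)
    (hF : ContDiffOn 𝕜 ∞ (uncurry F) (U ×ˢ univ)) (hx : x ∈ U) (i ℓ : ℕ) (s : 𝕜) :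
    ‖iteratedFDeriv 𝕜 i
        (fun y => iteratedDeriv ℓ (fun t => fderiv 𝕜 (fun z => F z t) y) s) x‖ =
      ‖iteratedFDeriv 𝕜 (i + 1) (fun y => iteratedDeriv ℓ (F y) s) x‖ := by
  have hcomm : (fun y => iteratedDeriv ℓ (fun t => fderiv 𝕜 (fun z => F z t) y) s) =ᶠ[𝓝 x]
      fderiv 𝕜 (fun y => iteratedDeriv ℓ (F y) s) :=
    eventually_of_mem (hU.mem_nhds hx) fun y hy => iteratedDeriv_fderiv_left_comm hU hF hy ℓ s
  rw [(hcomm.iteratedFDeriv 𝕜 i).eq_of_nhds, norm_iteratedFDeriv_fderiv]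

end PartialDerivatives

section DerivBounds

variable {ι 𝕜 E V W X : Type*} [NontriviallyNormedField 𝕜] [NormedAddCommGroup E] [NormedSpace 𝕜 E]
  [NormedAddCommGroup V] [NormedSpace 𝕜 V] [NormedAddCommGroup W] [NormedSpace 𝕜 W]
  [NormedAddCommGroup X] [NormedSpace 𝕜 X]

/-- The family `f` consists of functions smooth on `U` whose derivatives of order `< N` are
`O(b)` along `l`, as for a symbol class of weight `b`.  The filter lives on pairs (index, point), so
that `l = 𝓟 (univ ×ˢ U)` expresses bounds uniform in the index and in the point of `U`. -/
structure HasDerivBounds (𝕜 : Type*) {ι E V : Type*} [NontriviallyNormedField 𝕜]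
    [NormedAddCommGroup E] [NormedSpace 𝕜 E] [NormedAddCommGroup V] [NormedSpace 𝕜 V]
    (U : Set E) (l : Filter (ι × E)) (b : ι × E → ℝ) (N : ℕ) (f : ι → E → V) : Prop where
  contDiffOn : ∀ a, ContDiffOn 𝕜 ∞ (f a) U
  isBigO : ∀ j < N, (fun p : ι × E => iteratedFDeriv 𝕜 j (f p.1) p.2) =O[l] b

namespace HasDerivBounds

variable {U : Set E} {l : Filter (ι × E)} {b b' : ι × E → ℝ} {N : ℕ} {f g : ι → E → V}

protected lemma congr (hU : IsOpen U) (hl : ∀ᶠ p in l, p.2 ∈ U) (hf : HasDerivBounds 𝕜 U l b N f)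
    (hfg : ∀ a, EqOn (g a) (f a) U) : HasDerivBounds 𝕜 U l b N g where
  contDiffOn a := (hf.contDiffOn a).congr (hfg a)
  isBigO j hj := (hf.isBigO j hj).congr' (hl.mono fun p hp =>
    (((hfg p.1).symm.eventuallyEq_of_mem (hU.mem_nhds hp)).iteratedFDeriv 𝕜 j).eq_of_nhds) .rfl

lemma trans_isBigO (hf : HasDerivBounds 𝕜 U l b N f) (hb : b =O[l] b') :
    HasDerivBounds 𝕜 U l b' N f where
  contDiffOn := hf.contDiffOn
  isBigO j hj := (hf.isBigO j hj).trans hb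

lemma of_contDiffOn (hf : ∀ a, ContDiffOn 𝕜 ∞ (f a) U) : HasDerivBounds 𝕜 U l b 0 f where
  contDiffOn := hf
  isBigO _ hj := absurd hj (Nat.not_lt_zero _)

lemma of_succ (hf : HasDerivBounds 𝕜 U l b (N + 1) f) : HasDerivBounds 𝕜 U l b N f where
  contDiffOn := hf.contDiffOn
  isBigO j hj := hf.isBigO j (hj.trans N.lt_succ_self)

protected lemma fderiv (hU : IsOpen U) (hf : HasDerivBounds 𝕜 U l b (N + 1) f) :
    HasDerivBounds 𝕜 U l b N fun a => fderiv 𝕜 (f a) where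
  contDiffOn a := (hf.contDiffOn a).fderiv_of_isOpen hU (by simp)
  isBigO j hj := IsBigO.of_norm_left <| by
    simpa only [norm_iteratedFDeriv_fderiv]
      using (hf.isBigO (j + 1) (Nat.succ_lt_succ hj)).norm_left

lemma succ_of_fderiv (hf : ∀ a, ContDiffOn 𝕜 ∞ (f a) U)
    (h₀ : (fun p : ι × E => f p.1 p.2) =O[l] b)
    (h₁ : HasDerivBounds 𝕜 U l b N fun a => fderiv 𝕜 (f a)) :
    HasDerivBounds 𝕜 U l b (N + 1) f where
  contDiffOn := hf
  isBigO
    | 0, _ => IsBigO.of_norm_left (by simpa only [norm_iteratedFDeriv_zero] using h₀.norm_left)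
    | j + 1, hj => IsBigO.of_norm_left <| by
        simpa only [norm_iteratedFDeriv_fderiv]
          using (h₁.isBigO j (Nat.lt_of_succ_lt_succ hj)).norm_left

protected lemma add (hU : IsOpen U) (hl : ∀ᶠ p in l, p.2 ∈ U) (hf : HasDerivBounds 𝕜 U l b N f)
    (hg : HasDerivBounds 𝕜 U l b N g) : HasDerivBounds 𝕜 U l b N fun a x => f a x + g a x where
  contDiffOn a := (hf.contDiffOn a).add (hg.contDiffOn a)
  isBigO j hj := ((hf.isBigO j hj).add (hg.isBigO j hj)).congr' (hl.mono fun p hp =>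
    (iteratedFDeriv_add_apply
      (((hf.contDiffOn p.1).contDiffAt (hU.mem_nhds hp)).of_le ENat.LEInfty.out)
      (((hg.contDiffOn p.1).contDiffAt (hU.mem_nhds hp)).of_le ENat.LEInfty.out)).symm) .rfl

lemma bilinear (hU : IsOpen U) (hl : ∀ᶠ p in l, p.2 ∈ U) (B : V →L[𝕜] W →L[𝕜] X)
    {h : ι → E → W} (hf : HasDerivBounds 𝕜 U l b N f) (hh : HasDerivBounds 𝕜 U l b' N h) :
    HasDerivBounds 𝕜 U l (b * b') N fun a x => B (f a x) (h a x) where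
  contDiffOn a := B.isBoundedBilinearMap.contDiff.comp_contDiffOn
    ((hf.contDiffOn a).prodMk (hh.contDiffOn a))
  isBigO j hj := by
    have leibniz : ∀ᶠ p in l, ‖iteratedFDeriv 𝕜 j (fun x => B (f p.1 x) (h p.1 x)) p.2‖ ≤
        ‖B‖ * ∑ i ∈ Finset.range (j + 1), (j.choose i : ℝ) *
          ‖iteratedFDeriv 𝕜 i (f p.1) p.2‖ * ‖iteratedFDeriv 𝕜 (j - i) (h p.1) p.2‖ := by
      filter_upwards [hl] with p hp
      simpa only [iteratedFDerivWithin_of_isOpen _ hU hp] using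
        B.norm_iteratedFDerivWithin_le_of_bilinear (hf.contDiffOn p.1) (hh.contDiffOn p.1)
          hU.uniqueDiffOn hp (n := j) ENat.LEInfty.out
    refine (IsBigO.of_norm_eventuallyLE leibniz).trans <|
      .const_mul_left (.fun_sum fun i hi => ?_) _
    have hij : i < j + 1 := Finset.mem_range.1 hi
    exact ((hf.isBigO i (by lia)).norm_left.const_mul_left _).mul
      (hh.isBigO (j - i) (by lia)).norm_left

protected lemma inv {f : ι → E → 𝕜} (hU : IsOpen U) (hl : ∀ᶠ p in l, p.2 ∈ U)
    (hf : HasDerivBounds 𝕜 U l b N f) (hne : ∀ a, ∀ x ∈ U, f a x ≠ 0)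
    (hinv : (fun p : ι × E => (f p.1 p.2)⁻¹) =O[l] b⁻¹) :
    HasDerivBounds 𝕜 U l b⁻¹ N fun a x => (f a x)⁻¹ := by
  have hsmooth : ∀ a, ContDiffOn 𝕜 ∞ (fun x => (f a x)⁻¹) U :=
    fun a => (hf.contDiffOn a).inv (hne a)
  induction N with
  | zero => exact .of_contDiffOn hsmooth
  | succ N ih =>
    have hrec : HasDerivBounds 𝕜 U l b⁻¹ N fun a x => (f a x)⁻¹ := ih hf.of_succ
    have hweight : b⁻¹ * b⁻¹ * b = b⁻¹ := funext fun p => by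
      simpa only [inv_inv, Pi.mul_apply, Pi.inv_apply] using mul_self_mul_inv (b p)⁻¹
    have hquot : HasDerivBounds 𝕜 U l b⁻¹ N
        fun a x => -(((f a x)⁻¹ * (f a x)⁻¹) • fderiv 𝕜 (f a) x) :=
      hweight ▸ (hrec.bilinear hU hl (ContinuousLinearMap.mul 𝕜 𝕜) hrec).bilinear hU hl
        (-ContinuousLinearMap.lsmul 𝕜 𝕜) (hf.fderiv hU)
    refine succ_of_fderiv hsmooth hinv (hquot.congr hU hl fun a x hx => ?_)
    have hdiff : DifferentiableAt 𝕜 (f a) x :=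
      ((hf.contDiffOn a).contDiffAt (hU.mem_nhds hx)).differentiableAt (by simp)
    have hderiv : fderiv 𝕜 (fun x => (f a x)⁻¹) x = _ :=
      ((hasDerivAt_inv (hne a x hx)).comp_hasFDerivAt x hdiff.hasFDerivAt).fderiv
    rw [hderiv, ← mul_inv, ← sq]
    exact neg_smul _ _

end HasDerivBounds

end DerivBounds

universe u

section GraphDerivBounds

-- One universe for `𝕜`, `E` and `V`: differentiating in `x` replaces `V` by `E →L[𝕜] V`.
variable {ι : Type*} {𝕜 E V : Type u} [NontriviallyNormedField 𝕜] [NormedAddCommGroup E]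
  [NormedSpace 𝕜 E] [NormedAddCommGroup V] [NormedSpace 𝕜 V]
  {U : Set E} {l : Filter (ι × E)} {φ : ι → E → 𝕜} {w b r : ι × E → ℝ} {N : ℕ}

/-- The family `F` consists of functions smooth on `U × 𝕜` whose mixed derivatives, taken at the
points `(x, φ a x)` of the graphs, satisfy `∂ₓⁱ ∂ₛ^ℓ F = O(b w^ℓ)` along `l`: each derivative in `s`
costs a factor `w`, those in `x` are free.  In the derivatives `s` is frozen at `φ a x` before
differentiating in `x`. -/
structure HasGraphDerivBounds (U : Set E) (l : Filter (ι × E)) (φ : ι → E → 𝕜)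
    (w b : ι × E → ℝ) (F : ι → E → 𝕜 → V) : Prop where
  contDiffOn : ∀ a, ContDiffOn 𝕜 ∞ (uncurry (F a)) (U ×ˢ univ)
  isBigO : ∀ i ℓ : ℕ, (fun p : ι × E =>
    iteratedFDeriv 𝕜 i (fun y => iteratedDeriv ℓ (F p.1 y) (φ p.1 p.2)) p.2) =O[l] (b * w ^ ℓ)

namespace HasGraphDerivBounds

variable {F : ι → E → 𝕜 → V}

lemma of_fderiv_left [IsRCLikeNormedField 𝕜] (hU : IsOpen U) (hl : ∀ᶠ p in l, p.2 ∈ U)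
    (hF : ∀ a, ContDiffOn 𝕜 ∞ (uncurry (F a)) (U ×ˢ univ))
    (hbound : ∀ i ℓ : ℕ, (fun p : ι × E => iteratedFDeriv 𝕜 (i + 1)
      (fun y => iteratedDeriv ℓ (F p.1 y) (φ p.1 p.2)) p.2) =O[l] (b * w ^ ℓ)) :
    HasGraphDerivBounds U l φ w b fun a x s => fderiv 𝕜 (fun y => F a y s) x where
  contDiffOn a := contDiffOn_fderiv_left hU (hF a)
  isBigO i ℓ := IsBigO.of_norm_left <| (hbound i ℓ).norm_left.congr' (hl.mono fun p hp =>
    (norm_iteratedFDeriv_iteratedDeriv_fderiv_left hU (hF p.1) hp i ℓ _).symm) .rfl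

lemma of_deriv_right (hU : IsOpen U) (hF : ∀ a, ContDiffOn 𝕜 ∞ (uncurry (F a)) (U ×ˢ univ))
    (hbound : ∀ i ℓ : ℕ, (fun p : ι × E => iteratedFDeriv 𝕜 i
      (fun y => iteratedDeriv (ℓ + 1) (F p.1 y) (φ p.1 p.2)) p.2) =O[l] (b * w ^ ℓ)) :
    HasGraphDerivBounds U l φ w b fun a x => deriv (F a x) where
  contDiffOn a := contDiffOn_deriv_right hU (hF a)
  isBigO i ℓ := by simpa only [iteratedDeriv_succ'] using hbound i ℓ

lemma of_deriv_right_of_isBigO_one (hU : IsOpen U)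
    (hF : ∀ a, ContDiffOn 𝕜 ∞ (uncurry (F a)) (U ×ˢ univ))
    (hds : ∀ ℓ : ℕ, (fun p : ι × E => iteratedDeriv (ℓ + 1) (F p.1 p.2) (φ p.1 p.2))
      =O[l] (w ^ (ℓ + 1)))
    (hdx : ∀ i ℓ : ℕ, (fun p : ι × E => iteratedFDeriv 𝕜 (i + 1)
      (fun y => iteratedDeriv ℓ (F p.1 y) (φ p.1 p.2)) p.2) =O[l] (r * w ^ ℓ))
    (hr : r =O[l] (1 : ι × E → ℝ)) :
    HasGraphDerivBounds U l φ w w fun a x => deriv (F a x) := by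
  refine of_deriv_right hU hF fun i ℓ => ?_
  rw [← pow_succ']
  cases i with
  | zero => exact .of_norm_left <| by simpa only [norm_iteratedFDeriv_zero] using (hds ℓ).norm_left
  | succ i =>
    exact (hdx i (ℓ + 1)).trans <|
      (hr.mul (isBigO_refl (w ^ (ℓ + 1)) l)).congr_right fun _ => one_mul _

lemma fderiv_left [IsRCLikeNormedField 𝕜] (hU : IsOpen U) (hl : ∀ᶠ p in l, p.2 ∈ U)
    (hF : HasGraphDerivBounds U l φ w b F) :
    HasGraphDerivBounds U l φ w b fun a x s => fderiv 𝕜 (fun y => F a y s) x :=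
  of_fderiv_left hU hl hF.contDiffOn fun i => hF.isBigO (i + 1)

lemma deriv_right (hU : IsOpen U) (hF : HasGraphDerivBounds U l φ w b F) :
    HasGraphDerivBounds U l φ w (b * w) fun a x => deriv (F a x) :=
  of_deriv_right hU hF.contDiffOn fun i ℓ => by
    simpa only [pow_succ', mul_assoc] using hF.isBigO i (ℓ + 1)

lemma comp_graph_of_fderiv (hφ : ∀ a, ContDiffOn 𝕜 ∞ (φ a) U)
    (hF : HasGraphDerivBounds U l φ w b F)
    (hD : HasDerivBounds 𝕜 U l b N fun a => fderiv 𝕜 fun x => F a x (φ a x)) :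
    HasDerivBounds 𝕜 U l b (N + 1) fun a x => F a x (φ a x) :=
  .succ_of_fderiv (fun a => contDiffOn_comp_graph (hF.contDiffOn a) (hφ a))
    (.of_norm_left <| by simpa using (hF.isBigO 0 0).norm_left) hD

lemma comp_graph [IsRCLikeNormedField 𝕜] (hU : IsOpen U) (hl : ∀ᶠ p in l, p.2 ∈ U)
    (hφ : ∀ a, ContDiffOn 𝕜 ∞ (φ a) U)
    (hDφ : HasDerivBounds 𝕜 U l w⁻¹ N fun a => fderiv 𝕜 (φ a))
    (hF : HasGraphDerivBounds U l φ w b F) :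
    HasDerivBounds 𝕜 U l b (N + 1) fun a x => F a x (φ a x) := by
  induction N generalizing V b with
  | zero =>
    exact hF.comp_graph_of_fderiv hφ <| .of_contDiffOn fun a =>
      (contDiffOn_comp_graph (hF.contDiffOn a) (hφ a)).fderiv_of_isOpen hU (by simp)
  | succ N ih =>
    have hleft := ih hDφ.of_succ (hF.fderiv_left hU hl)
    have hright := ih hDφ.of_succ (hF.deriv_right hU)
    have hweight : (w⁻¹ * (b * w)) =O[l] b := isBigO_of_le l fun p => by
      rw [Pi.mul_apply, Pi.mul_apply, Pi.inv_apply, mul_left_comm, norm_mul]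
      refine mul_le_of_le_one_right (norm_nonneg _) ?_
      rw [norm_mul, norm_inv]
      exact inv_mul_le_one
    have hprod := (hDφ.bilinear hU hl (ContinuousLinearMap.smulRightL 𝕜 E V) hright).trans_isBigO
      hweight
    refine hF.comp_graph_of_fderiv hφ ((hleft.add hU hl hprod).congr hU hl fun a x hx => ?_)
    exact fderiv_comp_graph (differentiableAt_uncurry hU (hF.contDiffOn a) hx)
      (((hφ a).contDiffAt (hU.mem_nhds hx)).differentiableAt (by simp))

end HasGraphDerivBounds

theorem hasDerivBounds_fderiv_of_comp_graph_eq [IsRCLikeNormedField 𝕜] (hU : IsOpen U)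
    (hl : ∀ᶠ p in l, p.2 ∈ U) {H : ι → E → 𝕜 → 𝕜} {c : ι → 𝕜}
    (hH : ∀ a, ContDiffOn 𝕜 ∞ (uncurry (H a)) (U ×ˢ univ))
    (hφ : ∀ a, ContDiffOn 𝕜 ∞ (φ a) U)
    (hc : ∀ a, ∀ x ∈ U, H a x (φ a x) = c a)
    (hds : ∀ ℓ : ℕ, (fun p : ι × E => iteratedDeriv (ℓ + 1) (H p.1 p.2) (φ p.1 p.2))
      =O[l] (w ^ (ℓ + 1)))
    (hdx : ∀ i ℓ : ℕ, (fun p : ι × E => iteratedFDeriv 𝕜 (i + 1)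
      (fun y => iteratedDeriv ℓ (H p.1 y) (φ p.1 p.2)) p.2) =O[l] (r * w ^ ℓ))
    (hr : r =O[l] (1 : ι × E → ℝ))
    (hne : ∀ a, ∀ x ∈ U, deriv (H a x) (φ a x) ≠ 0)
    (hinv : (fun p : ι × E => (deriv (H p.1 p.2) (φ p.1 p.2))⁻¹) =O[l] w⁻¹) (N : ℕ) :
    HasDerivBounds 𝕜 U l (w⁻¹ * r) N fun a => fderiv 𝕜 (φ a) := by
  have hHs := HasGraphDerivBounds.of_deriv_right_of_isBigO_one hU hH hds hdx hr
  have hHx := HasGraphDerivBounds.of_fderiv_left hU hl hH hdx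
  induction N with
  | zero => exact .of_contDiffOn fun a => (hφ a).fderiv_of_isOpen hU (by simp)
  | succ N ih =>
    have hDφ : HasDerivBounds 𝕜 U l w⁻¹ N fun a => fderiv 𝕜 (φ a) :=
      ih.trans_isBigO <| ((isBigO_refl w⁻¹ l).mul hr).congr_right fun _ => mul_one _
    have hcoef := (hHs.comp_graph hU hl hφ hDφ).inv hU hl hne hinv
    have hquot := hcoef.bilinear hU hl (-ContinuousLinearMap.lsmul 𝕜 𝕜)
      (hHx.comp_graph hU hl hφ hDφ)
    refine hquot.congr hU hl fun a x hx => ?_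
    exact fderiv_eq_of_comp_graph_eventuallyEq_const (differentiableAt_uncurry hU (hH a) hx)
      (((hφ a).contDiffAt (hU.mem_nhds hx)).differentiableAt (by simp))
      (eventually_of_mem (hU.mem_nhds hx) (hc a)) (hne a x hx)

end GraphDerivBounds

lemma isBigO_principal_univ_prod_iff {ι E V : Type*} [SeminormedAddCommGroup V] {S : Set ι}
    {U : Set E} {f : ι → E → V} {g : ι → E → ℝ} (hg : ∀ a ∈ S, ∀ x ∈ U, 0 ≤ g a x) :
    ((fun p : S × E => f p.1 p.2) =O[𝓟 (univ ×ˢ U)] fun p => g p.1 p.2) ↔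
      ∃ M > 0, ∀ a ∈ S, ∀ x ∈ U, ‖f a x‖ ≤ M * g a x := by
  constructor
  · intro h
    obtain ⟨M, hM, hbound⟩ := h.exists_pos
    refine ⟨M, hM, fun a ha x hx => ?_⟩
    simpa only [Real.norm_of_nonneg (hg a ha x hx)] using
      isBigOWith_principal.1 hbound (⟨a, ha⟩, x) ⟨mem_univ _, hx⟩
  · rintro ⟨M, -, hbound⟩
    refine isBigO_principal.2 ⟨M, fun p hp => ?_⟩
    simpa only [Real.norm_of_nonneg (hg p.1 p.1.2 p.2 hp.2)] using hbound p.1 p.1.2 p.2 hp.2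

theorem stmt12_general {𝕜 E : Type u} [NontriviallyNormedField 𝕜] [IsRCLikeNormedField 𝕜]
    [NormedAddCommGroup E] [NormedSpace 𝕜 E] {U : Set E} (hU : IsOpen U) {C k₀ : ℝ} (hC : 0 < C)
    (hk₀ : 0 < k₀) {H : ℝ → E → 𝕜 → 𝕜} {φ : ℝ → E → 𝕜} {c : ℝ → 𝕜}
    (hH : ∀ k ≥ k₀, ContDiffOn 𝕜 ∞ (uncurry (H k)) (U ×ˢ univ))
    (hφ : ∀ k ≥ k₀, ContDiffOn 𝕜 ∞ (φ k) U)
    (hc : ∀ k ≥ k₀, ∀ x ∈ U, H k x (φ k x) = c k)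
    (ha : ∀ ℓ : ℕ, 1 ≤ ℓ → ∃ M > 0, ∀ k ≥ k₀, ∀ x ∈ U,
      ‖iteratedDeriv ℓ (H k x) (φ k x)‖ ≤ M * k ^ ℓ)
    (hb : ∀ i ℓ : ℕ, 1 ≤ i → ∃ M > 0, ∀ k ≥ k₀, ∀ x ∈ U,
      ‖iteratedFDeriv 𝕜 i (fun y => iteratedDeriv ℓ (H k y) (φ k x)) x‖ ≤ M * k ^ ℓ / k)
    (hd : ∀ k ≥ k₀, ∀ x ∈ U, k / C ≤ ‖deriv (H k x) (φ k x)‖) :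
    ∀ i : ℕ, 1 ≤ i → ∃ M > 0, ∀ k ≥ k₀, ∀ x ∈ U, ‖iteratedFDeriv 𝕜 i (φ k) x‖ ≤ M / k ^ 2 := by
  have hpos : ∀ k ∈ Ici k₀, 0 < k := fun k hk => hk₀.trans_le hk
  have hscale : (fun p : Ici k₀ × E => (p.1 : ℝ))⁻¹ =O[𝓟 (univ ×ˢ U)] (1 : Ici k₀ × E → ℝ) :=
    (isBigO_principal_univ_prod_iff (f := fun k _ => k⁻¹) (g := 1)
      fun _ _ _ _ => zero_le_one).2 ⟨k₀⁻¹, inv_pos.2 hk₀, fun k hk _ _ => by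
        simpa [abs_of_pos (hpos k hk)] using inv_anti₀ hk₀ hk⟩
  have hds (ℓ : ℕ) :=
    (isBigO_principal_univ_prod_iff (f := fun k x => iteratedDeriv (ℓ + 1) (H k x) (φ k x))
      fun k hk _ _ => pow_nonneg (hpos k hk).le (ℓ + 1)).2 (ha (ℓ + 1) (by simp))
  have hdx (i ℓ : ℕ) :=
    (isBigO_principal_univ_prod_iff (f := fun k x =>
        iteratedFDeriv 𝕜 (i + 1) (fun y => iteratedDeriv ℓ (H k y) (φ k x)) x)
      (g := fun k _ => k⁻¹ * k ^ ℓ) fun k hk _ _ =>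
        mul_nonneg (inv_nonneg.2 (hpos k hk).le) (pow_nonneg (hpos k hk).le ℓ)).2 <|
      (hb (i + 1) ℓ (by simp)).imp fun M hM =>
        ⟨hM.1, fun k hk x hx => (hM.2 k hk x hx).trans_eq (by ring)⟩
  have hinv := (isBigO_principal_univ_prod_iff (f := fun k x => (deriv (H k x) (φ k x))⁻¹)
    (g := fun k _ => k⁻¹) fun k hk _ _ => inv_nonneg.2 (hpos k hk).le).2 ⟨C, hC, fun k hk x hx => by
      simpa [div_eq_mul_inv] using inv_anti₀ (div_pos (hpos k hk) hC) (hd k hk x hx)⟩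
  have hne : ∀ k : Ici k₀, ∀ x ∈ U, deriv (H k x) (φ k x) ≠ 0 := fun k x hx =>
    norm_pos_iff.1 <| (div_pos (hpos k k.2) hC).trans_le (hd k k.2 x hx)
  rintro (_ | i) hi
  · contradiction
  have hD := (hasDerivBounds_fderiv_of_comp_graph_eq hU (eventually_principal.2 fun p hp => hp.2)
    (fun k : Ici k₀ => hH k k.2) (fun k => hφ k k.2) (fun k => hc k k.2) hds hdx hscale hne hinv
    (i + 1)).isBigO i i.lt_succ_self
  refine ((isBigO_principal_univ_prod_iff (f := fun k => iteratedFDeriv 𝕜 i (fderiv 𝕜 (φ k)))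
    (g := fun k _ => k⁻¹ * k⁻¹) fun k _ _ _ => mul_self_nonneg k⁻¹).1 hD).imp fun M hM =>
      ⟨hM.1, fun k hk x hx => ?_⟩
  rw [← norm_iteratedFDeriv_fderiv]
  exact (hM.2 k hk x hx).trans_eq (by rw [← mul_inv, ← sq, div_eq_mul_inv])

/-- Let `U ⊆ ℝⁿ` be open, `C > 0`, `k₀ ≥ 1`, and for `k ≥ k₀` let
`H_k : U × ℝ → ℝ` and `φ_k : U → ℝ` be smooth with `|φ_k| ≤ C k⁻²` and `H_k(x,φ_k(x)) = 1`
on `U`.  Under the derivative bounds (a) `|∂_x^α ∂_s^ℓ H_k| ≤ C_{α,ℓ} k^ℓ`,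
(b) `|∂_x^α ∂_s^ℓ H_k| ≤ C_{α,ℓ} k^{ℓ-1}` for `|α| ≥ 1`, and the lower bound
(c) `|∂_s H_k| ≥ k/C`, all on `{(x,s) : x ∈ U, |s| ≤ C k⁻²}`, one has
`|∂_x^α φ_k| ≤ C'_α k⁻²` on `U` for every `α` with `|α| ≥ 1` (multi-indices are
formalized through the order `i = |α|` of the full iterated derivative in `x`). -/
theorem stmt12 {n : ℕ} (hn : 1 ≤ n)
    (U : Set (Fin n → ℝ)) (hUopen : IsOpen U)
    (C k₀ : ℝ) (hC : 0 < C) (hk₀ : 1 ≤ k₀)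
    (H : ℝ → (Fin n → ℝ) → ℝ → ℝ)
    (φ : ℝ → (Fin n → ℝ) → ℝ)
    (hHsmooth : ∀ k ≥ k₀, ContDiffOn ℝ (⊤ : ℕ∞)
      (fun p : (Fin n → ℝ) × ℝ => H k p.1 p.2) (U ×ˢ univ))
    (hφsmooth : ∀ k ≥ k₀, ContDiffOn ℝ (⊤ : ℕ∞) (φ k) U)
    (hφbd : ∀ k ≥ k₀, ∀ x ∈ U, |φ k x| ≤ C / k ^ 2)
    (hφeq : ∀ k ≥ k₀, ∀ x ∈ U, H k x (φ k x) = 1)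
    (hda : ∀ i ℓ : ℕ, ∃ C' > (0:ℝ), ∀ k ≥ k₀, ∀ x ∈ U, ∀ s : ℝ, |s| ≤ C / k ^ 2 →
      ‖iteratedFDeriv ℝ i (fun y => iteratedDeriv ℓ (fun s' => H k y s') s) x‖
        ≤ C' * k ^ ℓ)
    (hdb : ∀ i ℓ : ℕ, 1 ≤ i → ∃ C' > (0:ℝ), ∀ k ≥ k₀, ∀ x ∈ U, ∀ s : ℝ,
      |s| ≤ C / k ^ 2 →
      ‖iteratedFDeriv ℝ i (fun y => iteratedDeriv ℓ (fun s' => H k y s') s) x‖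
        ≤ C' * k ^ ℓ / k)
    (hdc : ∀ k ≥ k₀, ∀ x ∈ U, ∀ s : ℝ, |s| ≤ C / k ^ 2 →
      k / C ≤ |deriv (fun s' => H k x s') s|) :
    ∀ i : ℕ, 1 ≤ i → ∃ C' > (0:ℝ), ∀ k ≥ k₀, ∀ x ∈ U,
      ‖iteratedFDeriv ℝ i (φ k) x‖ ≤ C' / k ^ 2 := by
  exact stmt12_general hUopen hC (zero_lt_one.trans_le hk₀) hHsmooth hφsmooth (c := 1) hφeq
    (fun ℓ _ => (hda 0 ℓ).imp fun _ h => ⟨h.1, fun k hk x hx => by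
      simpa only [norm_iteratedFDeriv_zero] using h.2 k hk x hx _ (hφbd k hk x hx)⟩)
    (fun i ℓ hi => (hdb i ℓ hi).imp fun _ h =>
      ⟨h.1, fun k hk x hx => h.2 k hk x hx _ (hφbd k hk x hx)⟩)
    (fun k hk x hx => hdc k hk x hx _ (hφbd k hk x hx))
end
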